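/- arXiv:1207.3206 — 2 statements merged into one kernel-verified Lean document; each statement's English description precedes it below -/
import Mathlib

section
/- Let n ≥ 1 be an integer and let X be an n-periodic collection of arcs of the ∞-gon. Then X = nc(nc X) if and only if X is a Ptolemy diagram. -/
/-- An arc of the ∞-gon: a pair `(i,j)` of integers with `j - i ≥ 2`. -/
def IsArc (a : ℤ × ℤ) : Prop := 2 ≤ a.2 - a.1

/-- Two arcs `(i,j)` and `(k,l)` cross if `i < k < j < l` or `k < i < l < j`. -/
def Cross (a b : ℤ × ℤ) : Prop :=
  (a.1 < b.1 ∧ b.1 < a.2 ∧ a.2 < b.2) ∨ (b.1 < a.1 ∧ a.1 < b.2 ∧ b.2 < a.2)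

/-- `nc X` is the collection of all arcs crossing no arc of `X`. -/
def nc (X : Set (ℤ × ℤ)) : Set (ℤ × ℤ) :=
  {a | IsArc a ∧ ∀ b ∈ X, ¬ Cross a b}

/-- A collection of arcs is `n`-periodic if it is stable under shifts by multiples of `n`. -/
def Periodic (n : ℤ) (X : Set (ℤ × ℤ)) : Prop :=
  ∀ i j r : ℤ, (i, j) ∈ X → (i + r * n, j + r * n) ∈ X

/-- The Ptolemy condition: whenever `(i,j), (r,s) ∈ X` cross with `i < r`
(so `i < r < j < s`), each of the pairs `(i,r)`, `(i,s)`, `(r,j)`, `(j,s)`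
that is an arc also belongs to `X`. -/
def IsPtolemy (X : Set (ℤ × ℤ)) : Prop :=
  ∀ i j r s : ℤ, (i, j) ∈ X → (r, s) ∈ X → i < r → r < j → j < s →
    (2 ≤ r - i → (i, r) ∈ X) ∧ (2 ≤ s - i → (i, s) ∈ X) ∧
    (2 ≤ j - r → (r, j) ∈ X) ∧ (2 ≤ s - j → (j, s) ∈ X)

theorem isPtolemy_nc (Y : Set (ℤ × ℤ)) : IsPtolemy (nc Y) := by
  intro i j r s h1 h2 hir hrj hjs
  have key : ∀ x y : ℤ, (x = i ∨ x = r ∨ x = j) → (y = r ∨ y = j ∨ y = s) →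
      2 ≤ y - x → (x, y) ∈ nc Y := by
    intro x y hx hy hxy
    refine ⟨hxy, fun c hc hcr => ?_⟩
    have a1 := h1.2 c hc
    have a2 := h2.2 c hc
    simp only [Cross] at a1 a2 hcr
    rcases hx with rfl | rfl | rfl <;> rcases hy with rfl | rfl | rfl <;> omega
  exact ⟨key _ _ (by simp) (by simp), key _ _ (by simp) (by simp),
    key _ _ (by simp) (by simp), key _ _ (by simp) (by simp)⟩

/-- Blocking at the left endpoint. -/
theorem left_fountain (X : Set (ℤ × ℤ)) (hP : IsPtolemy X)
    (a b : ℤ) (hab : (a, b) ∈ nc (nc X)) (hn : (a, b) ∉ X) :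
    (∀ v, b < v → (a, v) ∉ X) ∧ ∀ N, ∃ u, u < N ∧ (u, a) ∈ X := by
  have hlen : 2 ≤ b - a := hab.1
  obtain ⟨t, ⟨htb, hta, ht⟩, hmax⟩ := Int.exists_greatest_of_bdd
    (P := fun t => t < b ∧ a < t ∧ (t = a + 1 ∨ (a, t) ∈ X))
    ⟨b, fun z hz => hz.1.le⟩ ⟨a + 1, by omega, by omega, Or.inl rfl⟩
  have hno : ∀ q, a < q → t < q → q ≤ b → (a, q) ∉ X := by
    intro q h0 h1 h2 h3
    rcases eq_or_lt_of_le h2 with rfl | h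
    · exact hn h3
    · have := hmax q ⟨h, h0, Or.inr h3⟩
      omega
  have part1 : ∀ v, b < v → (a, v) ∉ X := by
    intro v hv hvX
    obtain ⟨u, ⟨hub, hu⟩, hmin⟩ := Int.exists_least_of_bdd
      (P := fun u => b < u ∧ (a, u) ∈ X) ⟨b, fun z hz => hz.1.le⟩ ⟨v, hv, hvX⟩
    have hno2 : ∀ q, t < q → q < u → (a, q) ∉ X := by
      intro q h1 h2 h3
      by_cases h : q ≤ b
      · exact hno q (by omega) h1 h h3
      · have := hmin q ⟨by omega, h3⟩
        omega
    refine hab.2 (t, u) ⟨show 2 ≤ u - t by omega, ?_⟩ (Or.inl ⟨hta, htb, hub⟩)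
    rintro ⟨p, q⟩ hpq (⟨h1, h2, h3⟩ | ⟨h1, h2, h3⟩) <;> dsimp only at h1 h2 h3
    · exact hno2 p h1 h2 ((hP a u p q hu hpq (by omega) h2 h3).1 (by omega))
    · rcases lt_trichotomy p a with h | rfl | h
      · exact hno2 q h2 h3 ((hP p q a u hpq hu h (by omega) h3).2.2.1 (by omega))
      · exact hno2 q h2 h3 hpq
      · rcases ht with ht | ht
        · omega
        · exact hno2 q h2 h3 ((hP a t p q ht hpq h h1 h2).2.1 (by omega))
  refine ⟨part1, ?_⟩
  by_contra! hcon
  obtain ⟨N, hN⟩ := hcon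
  have hno2 : ∀ q, t < q → (a, q) ∉ X := by
    intro q h1 h3
    by_cases h : q ≤ b
    · exact hno q (by omega) h1 h h3
    · exact part1 q (by omega) h3
  obtain ⟨u, ⟨hua, hu⟩, hmin⟩ := Int.exists_least_of_bdd
    (P := fun u => u < a ∧ (u = a - 1 ∨ (u, a) ∈ X))
    ⟨min N (a - 1), by
      rintro z ⟨h1, rfl | h2⟩
      · exact min_le_right _ _
      · by_contra h
        exact hN z (by omega) h2⟩ ⟨a - 1, by omega, Or.inl rfl⟩
  have hno3 : ∀ p, p < u → (p, a) ∉ X := by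
    intro p h1 h2
    have := hmin p ⟨by omega, Or.inr h2⟩
    omega
  refine hab.2 (u, t) ⟨show 2 ≤ t - u by omega, ?_⟩ (Or.inr ⟨hua, hta, htb⟩)
  rintro ⟨p, q⟩ hpq (⟨h1, h2, h3⟩ | ⟨h1, h2, h3⟩) <;> dsimp only at h1 h2 h3
  · rcases lt_trichotomy p a with h | rfl | h
    · rcases hu with hu | hu
      · omega
      · exact hno2 q h3 ((hP u a p q hu hpq h1 h (by omega)).2.2.2 (by omega))
    · exact hno2 q h3 hpq
    · rcases ht with ht | ht
      · omega
      · exact hno2 q h3 ((hP a t p q ht hpq h h2 h3).2.1 (by omega))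
  · rcases lt_trichotomy q a with h | rfl | h
    · rcases hu with hu | hu
      · omega
      · exact hno3 p h1 ((hP p q u a hpq hu h1 h2 h).2.1 (by omega))
    · exact hno3 p h1 hpq
    · rcases ht with ht | ht
      · omega
      · exact hno3 p h1 ((hP p q a t hpq ht (by omega) h h3).1 (by omega))

/-- Reflection of a collection of pairs. -/
def refl' (X : Set (ℤ × ℤ)) : Set (ℤ × ℤ) := {c | (-c.2, -c.1) ∈ X}

theorem nc_refl' (X : Set (ℤ × ℤ)) : nc (refl' X) = refl' (nc X) := by
  ext ⟨x, y⟩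
  simp only [nc, refl', IsArc, Cross, Set.mem_ofPred_eq]
  constructor
  · rintro ⟨h1, h2⟩
    refine ⟨by omega, fun c hc => ?_⟩
    have := h2 (-c.2, -c.1) (by simpa using hc)
    dsimp only at this
    omega
  · rintro ⟨h1, h2⟩
    refine ⟨by omega, fun c hc => ?_⟩
    have := h2 (-c.2, -c.1) hc
    dsimp only at this
    omega

theorem ptolemy_refl' (X : Set (ℤ × ℤ)) (hP : IsPtolemy X) : IsPtolemy (refl' X) := by
  intro i j r s h1 h2 h3 h4 h5
  obtain ⟨k1, k2, k3, k4⟩ := hP (-s) (-r) (-j) (-i) h2 h1 (by omega) (by omega) (by omega)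
  exact ⟨fun h => k4 (by omega), fun h => k2 (by omega), fun h => k3 (by omega),
    fun h => k1 (by omega)⟩

/-- For an `n`-periodic collection `X` of arcs of the ∞-gon,
`X = nc (nc X)` if and only if `X` is a Ptolemy diagram. -/
theorem nc_nc_eq_iff_isPtolemy (n : ℤ) (hn : 1 ≤ n) (X : Set (ℤ × ℤ))
    (hX : ∀ a ∈ X, IsArc a) (hper : Periodic n X) :
    X = nc (nc X) ↔ IsPtolemy X := by
  constructor
  · intro h
    rw [h]
    exact isPtolemy_nc _
  · intro hP
    apply Set.Subset.antisymm
    · intro c hc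
      refine ⟨hX c hc, fun d hd hcd => hd.2 c hc ?_⟩
      simp only [Cross] at hcd ⊢
      omega
    · rintro ⟨a, b⟩ hab
      by_contra hnot
      have hlen : 2 ≤ b - a := hab.1
      obtain ⟨hA, hL⟩ := left_fountain X hP a b hab hnot
      obtain ⟨-, hR⟩ := left_fountain (refl' X) (ptolemy_refl' X hP) (-b) (-a)
        (by rw [nc_refl', nc_refl']; simpa [refl'] using hab) (by simpa [refl'] using hnot)
      have hk : b - a + 1 ≤ (b - a + 1) * n := by nlinarith
      obtain ⟨k, hk'⟩ : ∃ k, k = (b - a + 1) * n := ⟨_, rfl⟩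
      obtain ⟨v, hv, hvX⟩ := hR (-(b + k))
      obtain ⟨u, hu, huX⟩ := hL (b - k)
      have hs := hper (- -b) (-v) (-(b - a + 1)) hvX
      have e1 : - -b + -(b - a + 1) * n = b - k := by rw [hk']; ring
      have e2 : -v + -(b - a + 1) * n = -v - k := by rw [hk']; ring
      rw [e1, e2] at hs
      exact hA (-v - k) (by omega)
        ((hP u a (b - k) (-v - k) huX hs hu (by omega) (by omega)).2.2.2 (by omega))
end

section
/- For every integer n ≥ 1, the set of n-periodic Ptolemy diagrams of the ∞-gon in which every arc has length at most n is finite, and its cardinality equals the sum over all integers ℓ ≥ 0 of 2^ℓ · C(n−1+ℓ, ℓ) · C(2n−1, n−1−2ℓ), where C(a,b) denotes the binomial coefficient (the summands vanish once n−1−2ℓ < 0, so the sum is finite). -/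
/-- The `n`-periodic Ptolemy diagrams of the ∞-gon all of whose arcs have length
at most `n`. -/
def goodDiagrams (n : ℕ) : Set (Set (ℤ × ℤ)) :=
  {X | (∀ a ∈ X, IsArc a) ∧ Periodic (n : ℤ) X ∧ IsPtolemy X ∧
    ∀ a ∈ X, a.2 - a.1 ≤ (n : ℤ)}

/-- `∑_{ℓ ≥ 0} 2^ℓ C(n−1+ℓ, ℓ) C(2n−1, n−1−2ℓ)`; the summands vanish for
`2ℓ > n − 1`, so the sum may be taken over `ℓ ≤ (n−1)/2`. -/
def torsionHalfCount (n : ℕ) : ℕ :=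
  ∑ ℓ ∈ Finset.range ((n - 1) / 2 + 1),
    2 ^ ℓ * Nat.choose (n - 1 + ℓ) ℓ * Nat.choose (2 * n - 1) (n - 1 - 2 * ℓ)


def Cell (N : ℤ → ℤ → Prop) (i j p : ℤ) : Prop :=
  i ≤ p ∧ p ≤ j ∧ ∀ a b, N a b → i ≤ a → b ≤ j → a < p → p < b → a = i ∧ b = j

structure Dis (n : ℤ) (N C : ℤ → ℤ → Prop) : Prop where
  lt : ∀ i j, N i j → i < j
  len : ∀ i j, N i j → j - i ≤ n
  edge : ∀ i, N i (i + 1)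
  perN : ∀ i j r, N i j → N (i + r * n) (j + r * n)
  perC : ∀ i j r, C i j → C (i + r * n) (j + r * n)
  nc : ∀ i j r s, N i j → N r s → i < r → r < j → j < s → False
  sub : ∀ i j, C i j → N i j
  big : ∀ i j, C i j → ∃ p q, i < p ∧ p < q ∧ q < j ∧ Cell N i j p ∧ Cell N i j q

def EE (N C : ℤ → ℤ → Prop) (p q : ℤ) : Prop :=
  N p q ∨ (p < q ∧ ∃ i j, C i j ∧ Cell N i j p ∧ Cell N i j q)

structure Pt (n : ℤ) (E : ℤ → ℤ → Prop) : Prop where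
  lt : ∀ i j, E i j → i < j
  len : ∀ i j, E i j → j - i ≤ n
  edge : ∀ i, E i (i + 1)
  per : ∀ i j r, E i j → E (i + r * n) (j + r * n)
  pt : ∀ i j r s, E i j → E r s → i < r → r < j → j < s → E i r ∧ E i s ∧ E r j ∧ E j s

def NN (E : ℤ → ℤ → Prop) (i j : ℤ) : Prop :=
  E i j ∧ ∀ r s, E r s → ¬ (i < r ∧ r < j ∧ j < s) ∧ ¬ (r < i ∧ i < s ∧ s < j)

def CC (E : ℤ → ℤ → Prop) (i j : ℤ) : Prop :=
  NN E i j ∧ ∃ p q, Cell (NN E) i j p ∧ Cell (NN E) i j q ∧ E p q ∧ ¬ NN E p q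

theorem Cell.per {n : ℤ} {N : ℤ → ℤ → Prop} (h : ∀ i j r, N i j → N (i + r * n) (j + r * n))
    {i j p : ℤ} (r : ℤ) (hc : Cell N i j p) : Cell N (i + r * n) (j + r * n) (p + r * n) := by
  obtain ⟨h1, h2, h3⟩ := hc
  refine ⟨by omega, by omega, fun a b hab ha hb hap hpb => ?_⟩
  have := h3 _ _ (h a b (-r) hab) (by linarith) (by linarith) (by linarith) (by linarith)
  constructor <;> linarith [this.1, this.2]

section dis
variable {n : ℤ} {N C : ℤ → ℤ → Prop}

/-- pairs of cell vertices do not cross dissection arcs -/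
theorem Dis.cell_nc (h : Dis n N C) {i j p q a b : ℤ} (hij : N i j) (hp : Cell N i j p)
    (hq : Cell N i j q) (hab : N a b) :
    ¬ (a < p ∧ p < b ∧ b < q) ∧ ¬ (p < a ∧ a < q ∧ q < b) := by
  obtain ⟨p1, p2, p3⟩ := hp
  obtain ⟨q1, q2, q3⟩ := hq
  constructor
  · rintro ⟨h1, h2, h3⟩
    by_cases hai : i ≤ a
    · have := p3 a b hab hai (by omega) h1 h2
      omega
    · exact h.nc a b i j hab hij (by omega) (by omega) (by omega)
  · rintro ⟨h1, h2, h3⟩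
    by_cases hai : b ≤ j
    · have := q3 a b hab (by omega) hai h2 h3
      omega
    · exact h.nc i j a b hij hab (by omega) (by omega) (by omega)

theorem cell_left {N : ℤ → ℤ → Prop} {i j : ℤ} (h : i ≤ j) : Cell N i j i :=
  ⟨le_rfl, h, fun a b _ h1 _ h2 _ => by omega⟩

theorem cell_right {N : ℤ → ℤ → Prop} {i j : ℤ} (h : i ≤ j) : Cell N i j j :=
  ⟨h, le_rfl, fun a b _ _ h1 _ h2 => by omega⟩

theorem Dis.ee_nc (h : Dis n N C) {p q a b : ℤ} (hp : EE N C p q) (hab : N a b) :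
    ¬ (a < p ∧ p < b ∧ b < q) ∧ ¬ (p < a ∧ a < q ∧ q < b) := by
  rcases hp with hp | ⟨hpq, i, j, hC, hp, hq⟩
  · exact ⟨fun ⟨h1, h2, h3⟩ => h.nc _ _ _ _ hab hp h1 h2 h3,
      fun ⟨h1, h2, h3⟩ => h.nc _ _ _ _ hp hab h1 h2 h3⟩
  · exact h.cell_nc (h.sub _ _ hC) hp hq hab

theorem Dis.pt (h : Dis n N C) : Pt n (EE N C) where
  lt := by
    rintro i j (hh | hh)
    · exact h.lt _ _ hh
    · exact hh.1
  len := by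
    rintro i j (hh | ⟨_, a, b, hC, h1, h2⟩)
    · exact h.len _ _ hh
    · have := h.len _ _ (h.sub _ _ hC)
      have := h1.1
      have := h2.2.1
      omega
  edge := fun i => Or.inl (h.edge i)
  per := by
    rintro i j r (hh | ⟨hlt, a, b, hC, h1, h2⟩)
    · exact Or.inl (h.perN _ _ _ hh)
    · exact Or.inr ⟨by omega, _, _, h.perC _ _ r hC, h1.per h.perN r, h2.per h.perN r⟩
  pt := by
    intro p q r s hpq hrs h1 h2 h3
    have hpq' := hpq
    have hrs' := hrs
    rcases hpq with hN | ⟨_, i, j, hC, hp, hq⟩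
    · exact absurd ⟨h1, h2, h3⟩ (h.ee_nc hrs hN).1
    rcases hrs with hN | ⟨_, i', j', hC', hr, hs⟩
    · exact absurd ⟨h1, h2, h3⟩ (h.ee_nc hpq' hN).2
    have n1 := h.sub _ _ hC
    have n2 := h.sub _ _ hC'
    have c1 := h.ee_nc hpq' n2
    have c2 := h.ee_nc hrs' n1
    have hsame : i = i' ∧ j = j' := by
      obtain ⟨p1, p2, p3⟩ := hp
      obtain ⟨q1, q2, q3⟩ := hq
      obtain ⟨r1, r2, r3⟩ := hr
      obtain ⟨s1, s2, s3⟩ := hs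
      have e1 : ¬ (i < i' ∧ i' < j ∧ j < j') := fun hh => h.nc i j i' j' n1 n2 hh.1 hh.2.1 hh.2.2
      have e2 : ¬ (i' < i ∧ i < j' ∧ j' < j) := fun hh => h.nc i' j' i j n2 n1 hh.1 hh.2.1 hh.2.2
      by_cases hc : i ≤ i' ∧ j' ≤ j
      · have := q3 i' j' n2 hc.1 hc.2 (by omega) (by omega)
        omega
      · have := r3 i j n1 (by omega) (by omega) (by omega) (by omega)
        omega
    obtain ⟨rfl, rfl⟩ := hsame
    exact ⟨Or.inr ⟨by omega, i, j, hC, hp, hr⟩, Or.inr ⟨by omega, i, j, hC, hp, hs⟩,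
      Or.inr ⟨by omega, i, j, hC, hr, hq⟩, Or.inr ⟨by omega, i, j, hC, hq, hs⟩⟩

/-- consecutive cell vertices are joined by an arc of the dissection -/
theorem Dis.consec (h : Dis n N C) {i j p q : ℤ} (hp : Cell N i j p)
    (hq : Cell N i j q) (hpq : p < q) (hne : ¬ (p = i ∧ q = j))
    (hc : ∀ r, p < r → r < q → ¬ Cell N i j r) : N p q := by
  obtain ⟨b, ⟨hb1, hb2⟩, hbm⟩ := Int.exists_greatest_of_bdd (P := fun b => N p b ∧ b ≤ q)
    ⟨q, fun z hz => hz.2⟩ ⟨p + 1, h.edge p, by omega⟩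
  by_contra hN
  have hbq : b ≠ q := by
    rintro rfl
    exact hN hb1
  have hpb := h.lt _ _ hb1
  have := hc b hpb (by omega)
  have hb3 : i ≤ b ∧ b ≤ j := ⟨by have := hp.1; omega, by have := hq.2.1; omega⟩
  simp only [Cell, not_and, not_forall] at this
  obtain ⟨a', b', hab, h1, h2, h3, h4, h5⟩ := this hb3.1 hb3.2
  have e1 := h.nc p b a' b' hb1 hab
  have e2 : ¬ a' < p := by
    intro hlt
    have := hp.2.2 a' b' hab h1 h2 hlt (by omega)
    omega
  have e3 : a' = p := by
    by_contra
    exact e1 (by omega) h3 h4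
  subst e3
  have e4 : b' ≤ q := by
    by_contra hlt
    have := hq.2.2 _ b' hab h1 h2 (by omega) (by omega)
    omega
  have := hbm b' ⟨hab, e4⟩
  omega

theorem Dis.nn (h : Dis n N C) : NN (EE N C) = N := by
  funext p q
  apply propext
  constructor
  · rintro ⟨hE, hn⟩
    rcases hE with hE | ⟨hlt, i, j, hC, hp, hq⟩
    · exact hE
    by_contra hN
    have hij := h.sub _ _ hC
    have hne : ¬ (p = i ∧ q = j) := by
      rintro ⟨rfl, rfl⟩
      exact hN hij
    have hr : ∃ r, p < r ∧ r < q ∧ Cell N i j r := by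
      by_contra hcon
      push Not at hcon
      exact hN (h.consec hp hq hlt hne hcon)
    obtain ⟨r, hr1, hr2, hr⟩ := hr
    have h1 := hp.1
    have h2 := hq.2.1
    have h3 := h.lt _ _ hij
    by_cases hpi : p = i
    · exact (hn r j (Or.inr ⟨by omega, i, j, hC, hr, cell_right h3.le⟩)).1
        ⟨hr1, hr2, by omega⟩
    · exact (hn i r (Or.inr ⟨by omega, i, j, hC, cell_left h3.le, hr⟩)).2
        ⟨by omega, hr1, hr2⟩
  · intro hN
    refine ⟨Or.inl hN, fun r s hrs => ?_⟩
    have := h.ee_nc hrs hN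
    tauto

theorem Dis.cc (h : Dis n N C) : CC (EE N C) = C := by
  funext i j
  apply propext
  unfold CC
  rw [h.nn]
  constructor
  · rintro ⟨hij, p, q, hp, hq, hE, hN⟩
    rcases hE with hE | ⟨hlt, i', j', hC, hp', hq'⟩
    · exact absurd hE hN
    have hij' := h.sub _ _ hC
    obtain ⟨p1, p2, p3⟩ := hp
    obtain ⟨q1, q2, q3⟩ := hq
    obtain ⟨p1', p2', p3'⟩ := hp'
    obtain ⟨q1', q2', q3'⟩ := hq'
    have e1 : ¬ (i < i' ∧ i' < j ∧ j < j') := fun hh => h.nc i j i' j' hij hij' hh.1 hh.2.1 hh.2.2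
    have e2 : ¬ (i' < i ∧ i < j' ∧ j' < j) := fun hh => h.nc i' j' i j hij' hij hh.1 hh.2.1 hh.2.2
    have : i = i' ∧ j = j' := by
      by_cases hc : i ≤ i' ∧ j' ≤ j
      · by_contra hne
        have hp : p = i' := by
          by_contra
          have := p3 i' j' hij' hc.1 hc.2 (by omega) (by omega)
          omega
        have hq : q = j' := by
          by_contra
          have := q3 i' j' hij' hc.1 hc.2 (by omega) (by omega)
          omega
        subst hp hq
        exact hN hij'
      · by_contra hne
        have hc : i' ≤ i ∧ j ≤ j' := by omega
        have hp : p = i := by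
          by_contra
          have := p3' i j hij hc.1 hc.2 (by omega) (by omega)
          omega
        have hq : q = j := by
          by_contra
          have := q3' i j hij hc.1 hc.2 (by omega) (by omega)
          omega
        subst hp hq
        exact hN hij
    rw [this.1, this.2]
    exact hC
  · intro hC
    have hij := h.sub _ _ hC
    have hlt := h.lt _ _ hij
    obtain ⟨p, q, h1, h2, h3, hp, hq⟩ := h.big _ _ hC
    refine ⟨hij, i, q, cell_left hlt.le, hq, Or.inr ⟨by omega, i, j, hC, cell_left hlt.le, hq⟩, ?_⟩
    intro hN
    have := hp.2.2 i q hN le_rfl h3.le h1 h2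
    omega

end dis

section ptol
variable {n : ℤ} {E : ℤ → ℤ → Prop}

/-- both orientations of a crossing -/
def XX (p q r s : ℤ) : Prop := (p < r ∧ r < q ∧ q < s) ∨ (r < p ∧ p < s ∧ s < q)

theorem Pt.nn_cross {a b p q : ℤ} (hab : NN E a b) (hpq : E p q) :
    ¬ XX p q a b := by
  have := hab.2 p q hpq
  unfold XX
  tauto

theorem Pt.exists_cross {p q : ℤ} (hpq : E p q) (hN : ¬ NN E p q) :
    ∃ r s, E r s ∧ XX p q r s := by
  unfold NN at hN
  simp only [not_and, not_forall] at hN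
  obtain ⟨r, s, h1, h2⟩ := hN hpq
  refine ⟨r, s, h1, ?_⟩
  unfold XX
  tauto

/-- endpoints of a crossing arc of a cell diagonal are in the cell -/
theorem Pt.cell_cross1 (h : Pt n E) {i j p q r s : ℤ} (hij : NN E i j) (hp : Cell (NN E) i j p)
    (hq : Cell (NN E) i j q) (hpq : E p q) (hrs : E r s) (h1 : p < r) (h2 : r < q) (h3 : q < s) :
    Cell (NN E) i j r ∧ Cell (NN E) i j s := by
  obtain ⟨p1, p2, p3⟩ := hp
  obtain ⟨q1, q2, q3⟩ := hq
  obtain ⟨pr, ps, rq, qs⟩ := h.pt _ _ _ _ hpq hrs h1 h2 h3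
  have hsj : s ≤ j := by
    have := Pt.nn_cross hij hrs
    unfold XX at this
    omega
  refine ⟨⟨by omega, by omega, fun a b hab ha hb hra hrb => ?_⟩,
    ⟨by omega, by omega, fun a b hab ha hb hra hrb => ?_⟩⟩
  · by_contra hne
    have c1 := Pt.nn_cross hab pr
    have c2 := Pt.nn_cross hab rq
    have c3 := Pt.nn_cross hab hrs
    have := p3 a b hab ha hb
    have := q3 a b hab ha hb
    unfold XX at *
    omega
  · by_contra hne
    have c1 := Pt.nn_cross hab ps
    have c2 := Pt.nn_cross hab qs
    have c3 := Pt.nn_cross hab hrs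
    have := p3 a b hab ha hb
    have := q3 a b hab ha hb
    unfold XX at *
    omega

theorem Pt.cell_cross2 (h : Pt n E) {i j p q r s : ℤ} (hij : NN E i j) (hp : Cell (NN E) i j p)
    (hq : Cell (NN E) i j q) (hpq : E p q) (hrs : E r s) (h1 : r < p) (h2 : p < s) (h3 : s < q) :
    Cell (NN E) i j r ∧ Cell (NN E) i j s := by
  obtain ⟨p1, p2, p3⟩ := hp
  obtain ⟨q1, q2, q3⟩ := hq
  obtain ⟨pr, ps, rq, qs⟩ := h.pt _ _ _ _ hrs hpq h1 h2 h3
  have hsj : i ≤ r := by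
    have := Pt.nn_cross hij hrs
    unfold XX at this
    omega
  refine ⟨⟨by omega, by omega, fun a b hab ha hb hra hrb => ?_⟩,
    ⟨by omega, by omega, fun a b hab ha hb hra hrb => ?_⟩⟩
  · by_contra hne
    have c1 := Pt.nn_cross hab pr
    have c2 := Pt.nn_cross hab ps
    have c3 := Pt.nn_cross hab hrs
    have := p3 a b hab ha hb
    have := q3 a b hab ha hb
    unfold XX at *
    omega
  · by_contra hne
    have c1 := Pt.nn_cross hab rq
    have c2 := Pt.nn_cross hab qs
    have c3 := Pt.nn_cross hab hrs
    have := p3 a b hab ha hb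
    have := q3 a b hab ha hb
    unfold XX at *
    omega

theorem Pt.nn_per (h : Pt n E) : ∀ i j r, NN E i j → NN E (i + r * n) (j + r * n) := by
  rintro i j r ⟨h1, h2⟩
  refine ⟨h.per _ _ _ h1, fun a b hab => ?_⟩
  have := h2 _ _ (h.per a b (-r) hab)
  have e1 : a + -r * n = a - r * n := by ring
  have e2 : b + -r * n = b - r * n := by ring
  rw [e1, e2] at this
  omega

theorem Pt.dis (h : Pt n E) : Dis n (NN E) (CC E) where
  lt := fun i j hh => h.lt _ _ hh.1
  len := fun i j hh => h.len _ _ hh.1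
  edge := fun i => ⟨h.edge i, fun r s _ => by omega⟩
  perN := h.nn_per
  perC := by
    rintro i j r ⟨h1, p, q, hp, hq, hE, hN⟩
    refine ⟨h.nn_per _ _ _ h1, _, _, hp.per h.nn_per r, hq.per h.nn_per r, h.per _ _ _ hE, ?_⟩
    intro hN'
    have := h.nn_per _ _ (-r) hN'
    apply hN
    convert this using 1 <;> ring
  nc := by
    intro i j r s h1 h2 h3 h4 h5
    exact (h1.2 r s h2.1).1 ⟨h3, h4, h5⟩
  sub := fun i j hh => hh.1
  big := by
    rintro i j ⟨h1, p, q, hp, hq, hE, hN⟩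
    obtain ⟨r, s, hrs, hX⟩ := Pt.exists_cross hE hN
    rcases hX with ⟨a1, a2, a3⟩ | ⟨a1, a2, a3⟩
    · obtain ⟨hr, hs⟩ := h.cell_cross1 h1 hp hq hE hrs a1 a2 a3
      refine ⟨r, q, ?_, a2, ?_, hr, hq⟩
      · have := hp.1; omega
      · have := hs.2.1; omega
    · obtain ⟨hr, hs⟩ := h.cell_cross2 h1 hp hq hE hrs a1 a2 a3
      refine ⟨p, s, ?_, a2, ?_, hp, hs⟩
      · have := hr.1; omega
      · have := hq.2.1; omega


theorem Pt.exists_nn (h : Pt n E) {p q : ℤ} (hpq : E p q) (hN : ¬ NN E p q) :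
    ∃ i j, CC E i j ∧ Cell (NN E) i j p ∧ Cell (NN E) i j q := by
  have hlt := h.lt _ _ hpq
  -- a longest arc containing (p,q)
  obtain ⟨L, ⟨i, j, hij, hip, hqj, hL⟩, hmax⟩ := Int.exists_greatest_of_bdd
    (P := fun L => ∃ i j, E i j ∧ i ≤ p ∧ q ≤ j ∧ j - i = L)
    ⟨n, by rintro z ⟨i, j, h1, _, _, rfl⟩; exact h.len _ _ h1⟩ ⟨_, p, q, hpq, le_rfl, le_rfl, rfl⟩
  have hNij : NN E i j := by
    by_contra hcon
    obtain ⟨r, s, hrs, hX⟩ := Pt.exists_cross hij hcon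
    rcases hX with ⟨a1, a2, a3⟩ | ⟨a1, a2, a3⟩
    · have := hmax _ ⟨i, s, (h.pt _ _ _ _ hij hrs a1 a2 a3).2.1, by omega, by omega, rfl⟩
      omega
    · have := hmax _ ⟨r, j, (h.pt _ _ _ _ hrs hij a1 a2 a3).2.1, by omega, by omega, rfl⟩
      omega
  clear hmax hL hij
  obtain ⟨L, ⟨i, j, hij, hip, hqj, hL⟩, hmin⟩ := Int.exists_least_of_bdd
    (P := fun L => ∃ i j, NN E i j ∧ i ≤ p ∧ q ≤ j ∧ j - i = L)
    ⟨0, by rintro z ⟨i, j, h1, _, _, rfl⟩; have := h.lt _ _ h1.1; omega⟩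
    ⟨_, i, j, hNij, hip, hqj, rfl⟩
  have key : ∀ a b, NN E a b → i ≤ a → b ≤ j → a ≤ p → q ≤ b → a = i ∧ b = j := by
    intro a b hab h1 h2 h3 h4
    have := hmin _ ⟨a, b, hab, h3, h4, rfl⟩
    omega
  have hp : Cell (NN E) i j p := by
    refine ⟨hip, by omega, fun a b hab h1 h2 h3 h4 => ?_⟩
    have := Pt.nn_cross hab hpq
    unfold XX at this
    exact key a b hab h1 h2 (by omega) (by omega)
  have hq : Cell (NN E) i j q := by
    refine ⟨by omega, by omega, fun a b hab h1 h2 h3 h4 => ?_⟩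
    have := Pt.nn_cross hab hpq
    unfold XX at this
    exact key a b hab h1 h2 (by omega) (by omega)
  exact ⟨i, j, ⟨hij, p, q, hp, hq, hpq, hN⟩, hp, hq⟩

/-- symmetric adjacency -/
def Adj (E : ℤ → ℤ → Prop) (p q : ℤ) : Prop := E p q ∨ E q p

theorem Adj.symm {p q : ℤ} (h : Adj E p q) : Adj E q p := Or.symm h

theorem Pt.adj_lt (h : Pt n E) {p q : ℤ} (ha : Adj E p q) (hlt : p < q) : E p q := by
  rcases ha with ha | ha
  · exact ha
  · have := h.lt _ _ ha
    omega

theorem Pt.adj (h : Pt n E) {a b c d : ℤ} (h1 : a < b) (h2 : b < c) (h3 : c < d)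
    (hac : Adj E a c) (hbd : Adj E b d) : Adj E a b ∧ Adj E b c ∧ Adj E c d ∧ Adj E a d := by
  have := h.pt _ _ _ _ (h.adj_lt hac (by omega)) (h.adj_lt hbd (by omega)) h1 h2 h3
  unfold Adj
  tauto

/-- the clique extension step, inside a gap -/
theorem Pt.ext_in (h : Pt n E) {M : Finset ℤ} (hM : ∀ x ∈ M, ∀ y ∈ M, x ≠ y → Adj E x y)
    {a b y z : ℤ} (ha : a ∈ M) (hb : b ∈ M) (hab : a < b) (hgap : ∀ x ∈ M, x ≤ a ∨ b ≤ x)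
    (hy : a < y ∧ y < b) (hz : z < a ∨ b < z) (hyz : Adj E y z) :
    ∀ c ∈ M, Adj E y c := by
  have hadj : Adj E a b := hM a ha b hb (by omega)
  have hya : Adj E y a ∧ Adj E y b := by
    rcases hz with hz | hz
    · have := h.adj hz hy.1 hy.2 hyz.symm hadj
      exact ⟨this.2.1.symm, this.2.2.1⟩
    · have := h.adj hy.1 hy.2 hz hadj hyz
      exact ⟨this.1.symm, this.2.1⟩
  intro c hc
  by_cases hca : c = a
  · exact hca ▸ hya.1
  by_cases hcb : c = b
  · exact hcb ▸ hya.2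
  by_cases hcz : c = z
  · exact hcz ▸ hyz
  have hac := hM a ha c hc (Ne.symm hca)
  have hbc := hM b hb c hc (Ne.symm hcb)
  have := hgap c hc
  rcases hz with hz | hz
  · rcases lt_or_ge c a with hlt | hlt
    · rcases lt_or_gt_of_ne hcz with h1 | h1
      · exact (h.adj h1 hz hy.1 hac.symm hyz.symm).2.2.2.symm
      · exact (h.adj h1 (by omega) hy.2 hyz.symm hbc.symm).2.1.symm
    · exact (h.adj hz hy.1 (by omega) hyz.symm hac).2.2.1
  · rcases lt_or_ge c a with hlt | hlt
    · exact (h.adj (by omega) hy.2 hz hbc.symm hyz).1.symm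
    · rcases lt_or_gt_of_ne hcz with h1 | h1
      · exact (h.adj hy.1 (by omega) h1 hac hyz).2.1
      · exact (h.adj hy.2 hz h1 hyz hbc).2.2.2

/-- the clique extension step, outside -/
theorem Pt.ext_out (h : Pt n E) {M : Finset ℤ} (hM : ∀ x ∈ M, ∀ y ∈ M, x ≠ y → Adj E x y)
    {a b y z : ℤ} (ha : a ∈ M) (hb : b ∈ M) (hab : a < b) (hgap : ∀ x ∈ M, a ≤ x ∧ x ≤ b)
    (hz : a < z ∧ z < b) (hy : y < a ∨ b < y) (hyz : Adj E y z) :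
    ∀ c ∈ M, Adj E y c := by
  have hadj : Adj E a b := hM a ha b hb (by omega)
  have hya : Adj E y a ∧ Adj E y b := by
    rcases hy with hy | hy
    · have := h.adj hy hz.1 hz.2 hyz hadj
      exact ⟨this.1, this.2.2.2⟩
    · have := h.adj hz.1 hz.2 hy hadj hyz.symm
      exact ⟨this.2.2.2.symm, this.2.2.1.symm⟩
  intro c hc
  by_cases hca : c = a
  · exact hca ▸ hya.1
  by_cases hcb : c = b
  · exact hcb ▸ hya.2
  by_cases hcz : c = z
  · exact hcz ▸ hyz
  have hac := hM a ha c hc (Ne.symm hca)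
  have hbc := hM b hb c hc (Ne.symm hcb)
  have := hgap c hc
  rcases hy with hy | hy
  · rcases lt_or_gt_of_ne hcz with h1 | h1
    · exact (h.adj (by omega) h1 hz.2 hyz hbc.symm).1
    · exact (h.adj hy hz.1 h1 hyz hac).2.2.2
  · rcases lt_or_gt_of_ne hcz with h1 | h1
    · exact (h.adj h1 hz.2 hy hbc.symm hyz.symm).2.2.2.symm
    · exact (h.adj hz.1 h1 (by omega) hac hyz.symm).2.2.1.symm

theorem Pt.cell_xx (h : Pt n E) {i j p q r s : ℤ} (hij : NN E i j) (hp : Cell (NN E) i j p)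
    (hq : Cell (NN E) i j q) (hpq : E p q) (hrs : E r s) (hX : XX p q r s) :
    Cell (NN E) i j r ∧ Cell (NN E) i j s := by
  rcases hX with ⟨a1, a2, a3⟩ | ⟨a1, a2, a3⟩
  · exact h.cell_cross1 hij hp hq hpq hrs a1 a2 a3
  · exact h.cell_cross2 hij hp hq hpq hrs a1 a2 a3

def Good (E : ℤ → ℤ → Prop) (i j : ℤ) (M : Finset ℤ) : Prop :=
  (∀ x ∈ M, Cell (NN E) i j x) ∧ (∀ x ∈ M, ∀ y ∈ M, x ≠ y → Adj E x y) ∧ 3 ≤ M.card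

theorem Good.insert {i j y : ℤ} {M : Finset ℤ} (hM : Good E i j M) (hy : Cell (NN E) i j y)
    (h : ∀ c ∈ M, Adj E y c) : Good E i j (insert y M) := by
  obtain ⟨h1, h2, h3⟩ := hM
  refine ⟨?_, ?_, h3.trans (Finset.card_le_card (Finset.subset_insert _ _))⟩
  · intro x hx
    rcases Finset.mem_insert.1 hx with rfl | hx
    · exact hy
    · exact h1 x hx
  · intro x hx z hz hne
    rcases Finset.mem_insert.1 hx with hx1 | hx1 <;> rcases Finset.mem_insert.1 hz with hz1 | hz1
    · exact absurd (hx1.trans hz1.symm) hne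
    · exact hx1 ▸ h z hz1
    · exact hz1 ▸ (h x hx1).symm
    · exact h2 x hx1 z hz1 hne

theorem Pt.exists_ext (h : Pt n E) {i j : ℤ} (hij : NN E i j) {M : Finset ℤ}
    (hM : Good E i j M) {x : ℤ} (hx : Cell (NN E) i j x) (hxM : x ∉ M) :
    ∃ y, y ∉ M ∧ Good E i j (insert y M) := by
  obtain ⟨hK, hcl, hcard⟩ := id hM
  by_cases hbet : (M.filter (· < x)).Nonempty ∧ (M.filter (x < ·)).Nonempty
  · obtain ⟨n1, n2⟩ := hbet
    obtain ⟨a, ha, hamax⟩ := Finset.exists_max_image _ id n1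
    obtain ⟨b, hb, hbmin⟩ := Finset.exists_min_image _ id n2
    simp only [Finset.mem_filter, id] at ha hb hamax hbmin
    have hab : a < b := by omega
    have hE : E a b := h.adj_lt (hcl a ha.1 b hb.1 (by omega)) hab
    have hgap : ∀ c ∈ M, c ≤ a ∨ b ≤ c := by
      intro c hc
      rcases lt_trichotomy c x with h1 | h1 | h1
      · exact Or.inl (hamax c ⟨hc, h1⟩)
      · subst h1
        exact absurd hc hxM
      · exact Or.inr (hbmin c ⟨hc, h1⟩)
    have hN : ¬ NN E a b := by
      intro hN
      have e := hx.2.2 a b hN (hK a ha.1).1 (hK b hb.1).2.1 ha.2 hb.2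
      have : M ⊆ {a, b} := by
        intro c hc
        have := hgap c hc
        have := (hK c hc).1
        have := (hK c hc).2.1
        simp only [Finset.mem_insert, Finset.mem_singleton]
        omega
      have := Finset.card_le_card this
      have := Finset.card_le_two (a := a) (b := b)
      omega
    obtain ⟨r, s, hrs, hX⟩ := Pt.exists_cross hE hN
    have hc := h.cell_xx hij (hK a ha.1) (hK b hb.1) hE hrs hX
    rcases hX with ⟨a1, a2, a3⟩ | ⟨a1, a2, a3⟩
    · refine ⟨r, fun hr => ?_, hM.insert hc.1 ?_⟩
      · have := hgap r hr
        omega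
      · exact h.ext_in hcl ha.1 hb.1 hab hgap ⟨a1, a2⟩ (Or.inr a3) (Or.inl hrs)
    · refine ⟨s, fun hr => ?_, hM.insert hc.2 ?_⟩
      · have := hgap s hr
        omega
      · exact h.ext_in hcl ha.1 hb.1 hab hgap ⟨a2, a3⟩ (Or.inl a1) (Or.inr hrs)
  · have hne : M.Nonempty := Finset.card_pos.1 (by omega)
    obtain ⟨b, hb, hbmax⟩ := Finset.exists_max_image _ id hne
    obtain ⟨a, ha, hamin⟩ := Finset.exists_min_image _ id hne
    simp only [id] at hbmax hamin
    have hout : x < a ∨ b < x := by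
      by_contra hcon
      apply hbet
      have h1 : x ≠ a := fun e => hxM (e ▸ ha)
      have h2 : x ≠ b := fun e => hxM (e ▸ hb)
      exact ⟨⟨a, by simp [ha]; omega⟩, ⟨b, by simp [hb]; omega⟩⟩
    have hmid : ∃ c ∈ M, a < c ∧ c < b := by
      by_contra hcon
      push Not at hcon
      have : M ⊆ {a, b} := by
        intro c hc
        have h1 := hcon c hc
        have h2 := hbmax c hc
        have h3 := hamin c hc
        simp only [Finset.mem_insert, Finset.mem_singleton]
        omega
      have := Finset.card_le_card this
      have := Finset.card_le_two (a := a) (b := b)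
      omega
    obtain ⟨c, hc, hac, hcb⟩ := hmid
    have hab : a < b := by omega
    have hE : E a b := h.adj_lt (hcl a ha b hb (by omega)) hab
    have hgap : ∀ c ∈ M, a ≤ c ∧ c ≤ b := fun c hc => ⟨hamin c hc, hbmax c hc⟩
    have hN : ¬ NN E a b := by
      intro hN
      have e := (hK c hc).2.2 a b hN (hK a ha).1 (hK b hb).2.1 hac hcb
      have := hx.1
      have := hx.2.1
      omega
    obtain ⟨r, s, hrs, hX⟩ := Pt.exists_cross hE hN
    have hc := h.cell_xx hij (hK a ha) (hK b hb) hE hrs hX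
    rcases hX with ⟨a1, a2, a3⟩ | ⟨a1, a2, a3⟩
    · refine ⟨s, fun hr => ?_, hM.insert hc.2 ?_⟩
      · have := hgap s hr
        omega
      · exact h.ext_out hcl ha hb hab hgap ⟨a1, a2⟩ (Or.inr a3) (Or.inr hrs)
    · refine ⟨r, fun hr => ?_, hM.insert hc.1 ?_⟩
      · have := hgap r hr
        omega
      · exact h.ext_out hcl ha hb hab hgap ⟨a2, a3⟩ (Or.inl a1) (Or.inl hrs)

theorem Pt.clique (h : Pt n E) {i j p q : ℤ} (hC : CC E i j) (hp : Cell (NN E) i j p)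
    (hq : Cell (NN E) i j q) (hlt : p < q) : E p q := by
  classical
  obtain ⟨hij, p', q', hp', hq', hE, hN⟩ := hC
  obtain ⟨r, s, hrs, hX⟩ := Pt.exists_cross hE hN
  have hc := h.cell_xx hij hp' hq' hE hrs hX
  have h0 : ∃ M, Good E i j M := by
    have hlt' := h.lt _ _ hE
    rcases hX with ⟨a1, a2, a3⟩ | ⟨a1, a2, a3⟩
    · obtain ⟨e1, e2, e3, e4⟩ := h.pt _ _ _ _ hE hrs a1 a2 a3
      refine ⟨{p', r, q'}, ?_, ?_, ?_⟩
      · simp only [Finset.mem_insert, Finset.mem_singleton]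
        rintro x (rfl | rfl | rfl)
        exacts [hp', hc.1, hq']
      · simp only [Finset.mem_insert, Finset.mem_singleton]
        rintro x (rfl | rfl | rfl) y (rfl | rfl | rfl) hne <;> unfold Adj <;> tauto
      · rw [Finset.card_eq_three.2 ⟨p', r, q', by omega, by omega, by omega, rfl⟩]
    · obtain ⟨e1, e2, e3, e4⟩ := h.pt _ _ _ _ hrs hE a1 a2 a3
      refine ⟨{p', s, q'}, ?_, ?_, ?_⟩
      · simp only [Finset.mem_insert, Finset.mem_singleton]
        rintro x (rfl | rfl | rfl)
        exacts [hp', hc.2, hq']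
      · simp only [Finset.mem_insert, Finset.mem_singleton]
        rintro x (rfl | rfl | rfl) y (rfl | rfl | rfl) hne <;> unfold Adj <;> tauto
      · rw [Finset.card_eq_three.2 ⟨p', s, q', by omega, by omega, by omega, rfl⟩]
  obtain ⟨M0, hM0⟩ := h0
  have hsub : ∀ M, Good E i j M → M ⊆ Finset.Icc i j := by
    intro M hM x hx
    exact Finset.mem_Icc.2 ⟨(hM.1 x hx).1, (hM.1 x hx).2.1⟩
  obtain ⟨M, hM, hmax⟩ := Finset.exists_max_image
    ((Finset.Icc i j).powerset.filter (Good E i j)) Finset.card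
    ⟨M0, by simp [hM0, hsub M0 hM0]⟩
  simp only [Finset.mem_filter, Finset.mem_powerset] at hM hmax
  have hall : ∀ x, Cell (NN E) i j x → x ∈ M := by
    intro x hx
    by_contra hxM
    obtain ⟨y, hy, hg⟩ := h.exists_ext hij hM.2 hx hxM
    have := hmax _ ⟨hsub _ hg, hg⟩
    rw [Finset.card_insert_of_notMem hy] at this
    omega
  exact h.adj_lt (hM.2.2.1 p (hall p hp) q (hall q hq) (by omega)) hlt

theorem Pt.ee (h : Pt n E) : EE (NN E) (CC E) = E := by
  funext p q
  apply propext
  constructor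
  · rintro (hN | ⟨hlt, i, j, hC, hp, hq⟩)
    · exact hN.1
    · exact h.clique hC hp hq hlt
  · intro hE
    by_cases hN : NN E p q
    · exact Or.inl hN
    · obtain ⟨i, j, h1, h2, h3⟩ := h.exists_nn hE hN
      exact Or.inr ⟨h.lt _ _ hE, i, j, h1, h2, h3⟩

end ptol

/-! ### Words -/

noncomputable def hgt (f : ℤ → ℤ) (j : ℤ) : ℤ := ∑ k ∈ Finset.Ioc 0 j, f k - ∑ k ∈ Finset.Ioc j 0, f k

theorem hgt_step (f : ℤ → ℤ) (j : ℤ) : hgt f j = hgt f (j - 1) + f j := by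
  unfold hgt
  rcases le_or_gt 1 j with h | h
  · have e1 : Finset.Ioc 0 j = insert j (Finset.Ioc 0 (j - 1)) := by
      ext x; simp only [Finset.mem_Ioc, Finset.mem_insert]; omega
    have e2 : Finset.Ioc j 0 = ∅ := by
      ext x; simp; omega
    have e3 : Finset.Ioc (j - 1) 0 = ∅ := by
      ext x; simp; omega
    rw [e1, e2, e3, Finset.sum_insert (by simp)]
    simp
    ring
  · have e1 : Finset.Ioc (j - 1) 0 = insert j (Finset.Ioc j 0) := by
      ext x; simp only [Finset.mem_Ioc, Finset.mem_insert]; omega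
    have e2 : Finset.Ioc 0 j = ∅ := by
      ext x; simp; omega
    have e3 : Finset.Ioc 0 (j - 1) = ∅ := by
      ext x; simp; omega
    rw [e1, e2, e3, Finset.sum_insert (by simp)]
    simp

/-- the stack: positions `i ≤ j` still visible at time `j`. -/
def St (h : ℤ → ℤ) (j i : ℤ) : Prop := i ≤ j ∧ ∀ m, i < m → m ≤ j → h i < h m

structure Wd (n : ℕ) (T C : ℤ → Finset ℕ) (h : ℤ → ℤ) : Prop where
  step : ∀ j, h j = h (j - 1) + 1 - (((T j).sup id : ℕ) : ℤ)
  val0 : ∀ j, 0 ∉ T j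
  sub : ∀ j, C j ⊆ T j
  v2 : ∀ j, ∀ t ∈ C j, 2 ≤ t ∧ t - 1 ∉ T j
  perT : ∀ j, T (j + n) = T j
  perC : ∀ j, C (j + n) = C j
  drift : ∃ d, 1 ≤ d ∧ ∀ j, h (j + n) = h j + d

def NT (T : ℤ → Finset ℕ) (h : ℤ → ℤ) (i j : ℤ) : Prop :=
  i < j ∧ St h (j - 1) i ∧ (i = j - 1 ∨ ∃ t ∈ T j, h (j - 1) - h i = (t : ℤ))

def CT (C : ℤ → Finset ℕ) (h : ℤ → ℤ) (i j : ℤ) : Prop :=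
  i < j ∧ St h (j - 1) i ∧ ∃ t ∈ C j, h (j - 1) - h i = (t : ℤ)

theorem per_mul {β : Type*} {n : ℤ} {f : ℤ → β} (hf : ∀ j, f (j + n) = f j) (j r : ℤ) :
    f (j + r * n) = f j := by
  have := Function.Periodic.int_mul (f := f) (c := n) hf r j
  simpa using this

theorem drift_mul {n d : ℤ} {f : ℤ → ℤ} (hf : ∀ j, f (j + n) = f j + d) (j r : ℤ) :
    f (j + r * n) = f j + r * d := by
  induction r using Int.induction_on with
  | zero => simp
  | succ k ih =>
    have := hf (j + k * n)
    rw [show j + ((k : ℤ) + 1) * n = j + k * n + n by ring, this, ih]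
    ring
  | pred k ih =>
    have := hf (j + (-(k : ℤ) - 1) * n)
    rw [show j + (-(k : ℤ) - 1) * n + n = j + -(k : ℤ) * n by ring, ih] at this
    linarith

theorem St.lt_of_lt {h : ℤ → ℤ} {j i i' : ℤ} (h1 : St h j i) (h2 : St h j i') (hlt : i < i') :
    h i < h i' := h1.2 i' hlt h2.1

theorem St.inj {h : ℤ → ℤ} {j i i' : ℤ} (h1 : St h j i) (h2 : St h j i') (he : h i = h i') :
    i = i' := by
  rcases lt_trichotomy i i' with hlt | hlt | hlt
  · have := h1.lt_of_lt h2 hlt; omega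
  · exact hlt
  · have := h2.lt_of_lt h1 hlt; omega

section wd
variable {n : ℕ} {T C : ℤ → Finset ℕ} {h : ℤ → ℤ}

theorem Wd.le_succ (w : Wd n T C h) (j : ℤ) : h (j + 1) ≤ h j + 1 := by
  have := w.step (j + 1)
  rw [add_sub_cancel_right] at this
  omega

theorem Wd.exists_depth (w : Wd n T C h) (j : ℤ) (t : ℕ) :
    ∃ i, St h j i ∧ h j - h i = t := by
  obtain ⟨d, hd, hdr⟩ := w.drift
  obtain ⟨i, ⟨hi1, hi2⟩, hmax⟩ := Int.exists_greatest_of_bdd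
    (P := fun i => i ≤ j ∧ h i ≤ h j - t) ⟨j, fun z hz => hz.1⟩
    ⟨j + (-(t : ℤ)) * n, by nlinarith [Int.natCast_nonneg t, Int.natCast_nonneg n], by
      rw [drift_mul hdr]; nlinarith [Int.natCast_nonneg t]⟩
  have hgt : ∀ m, i < m → m ≤ j → h j - t < h m := by
    intro m h1 h2
    by_contra hcon
    have := hmax m ⟨h2, by omega⟩
    omega
  refine ⟨i, ⟨hi1, fun m h1 h2 => by have := hgt m h1 h2; omega⟩, ?_⟩
  rcases hi1.eq_or_lt with rfl | hlt
  · omega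
  · have h1 := hgt (i + 1) (by omega) (by omega)
    have h2 := w.le_succ i
    omega

theorem Wd.nt_le (w : Wd n T C h) {i j : ℤ} (hN : NT T h i j) : h j ≤ h i + 1 := by
  obtain ⟨h1, h2, h3⟩ := hN
  have := w.step j
  rcases h3 with rfl | ⟨t, ht, h3⟩
  · omega
  · have : t ≤ (T j).sup id := Finset.le_sup (f := id) ht
    omega

theorem Wd.st_per (w : Wd n T C h) {i j : ℤ} (r : ℤ) (hs : St h j i) :
    St h (j + r * n) (i + r * n) := by
  obtain ⟨d, hd, hdr⟩ := w.drift
  refine ⟨by have := hs.1; omega, fun m h1 h2 => ?_⟩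
  have := hs.2 (m + (-r) * n) (by linarith) (by linarith)
  rw [drift_mul hdr] at this ⊢
  linarith

theorem Wd.ct_nt (w : Wd n T C h) {i j : ℤ} (hC : CT C h i j) : NT T h i j := by
  obtain ⟨h1, h2, t, ht, h3⟩ := hC
  exact ⟨h1, h2, Or.inr ⟨t, w.sub j ht, h3⟩⟩

theorem Wd.h_per (w : Wd n T C h) (i j r : ℤ) :
    h (j + r * n - 1) - h (i + r * n) = h (j - 1) - h i := by
  obtain ⟨d, hd, hdr⟩ := w.drift
  rw [show j + r * n - 1 = j - 1 + r * n by ring, drift_mul hdr, drift_mul hdr]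
  ring

theorem Wd.nt_nc (w : Wd n T C h) {i j r s : ℤ} (h1 : NT T h i j) (h2 : NT T h r s)
    (a1 : i < r) (a2 : r < j) (a3 : j < s) : False := by
  have e1 := w.nt_le h1
  have e2 := h1.2.1.2 r a1 (by omega)
  have e3 := h2.2.1.2 j a2 (by omega)
  omega

theorem Wd.st_iff (w : Wd n T C h) (j i : ℤ) :
    St h j i ↔ i ≤ j ∧ ∀ a b, NT T h a b → a < i → i < b → b ≤ j → False := by
  constructor
  · intro hs
    refine ⟨hs.1, fun a b hab h1 h2 h3 => ?_⟩
    have e1 := w.nt_le hab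
    have e2 := hab.2.1.2 i h1 (by omega)
    have e3 := hs.2 b h2 h3
    omega
  · rintro ⟨h1, h2⟩
    refine ⟨h1, ?_⟩
    by_contra hcon
    push Not at hcon
    obtain ⟨m, ⟨hm1, hm2, hm3⟩, hmin⟩ := Int.exists_least_of_bdd
      (P := fun m => i < m ∧ m ≤ j ∧ h m ≤ h i) ⟨i, fun z hz => hz.1.le⟩ hcon
    have hs : St h (m - 1) i := by
      refine ⟨by omega, fun k k1 k2 => ?_⟩
      by_contra hk
      have := hmin k ⟨k1, by omega, by omega⟩
      omega
    have hst := w.step m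
    have hle : h i ≤ h (m - 1) := by
      by_cases e : i = m - 1
      · rw [e]
      · exact (hs.2 (m - 1) (by omega) le_rfl).le
    obtain ⟨a, ha, hda⟩ := w.exists_depth (m - 1) ((T m).sup id)
    have hne : (T m).Nonempty := by
      by_contra he
      rw [Finset.not_nonempty_iff_eq_empty] at he
      rw [he] at hst
      simp at hst
      omega
    obtain ⟨t, ht, hsup⟩ := Finset.exists_mem_eq_sup (T m) hne id
    have hai : a < i := by
      by_contra hcon
      have : h i ≤ h a := by
        rcases (not_lt.1 hcon).eq_or_lt with e | e
        · rw [e]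
        · exact (hs.lt_of_lt ha e).le
      omega
    refine h2 a m ⟨by have := ha.1; omega, ha, Or.inr ⟨t, ht, ?_⟩⟩ hai hm1 hm2
    rw [hda, hsup]
    rfl

theorem Wd.cell (w : Wd n T C h) {i j p : ℤ} {t : ℕ} (hp : St h (j - 1) p)
    (hi : St h (j - 1) i) (ht : h (j - 1) - h i = (t : ℤ)) (hip : i ≤ p) (ht1 : t - 1 ∉ T j)
    (hp2 : h p ≤ h i + 2) (h2 : 2 ≤ t) : Cell (NT T h) i j p := by
  refine ⟨hip, by have := hp.1; omega, fun a b hab h1 h2 h3 h4 => ?_⟩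
  have hb : b = j := by
    by_contra hne
    exact ((w.st_iff _ _).1 hp).2 a b hab h3 h4 (by omega)
  subst hb
  refine ⟨?_, rfl⟩
  by_contra hne
  have e1 : h i < h a := hi.lt_of_lt hab.2.1 (by omega)
  have e2 : h a < h p := hab.2.1.lt_of_lt hp h3
  rcases hab.2.2 with hh | ⟨t', ht', hh⟩
  · have := hp.1
    omega
  · apply ht1
    have : t' = t - 1 := by omega
    rwa [this] at ht'

theorem Wd.dis (w : Wd n T C h) (hn : 1 ≤ n) : Dis n (NT T h) (CT C h) where
  lt := fun i j hh => hh.1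
  len := by
    intro i j hN
    by_contra hcon
    obtain ⟨d, hd, hdr⟩ := w.drift
    have e1 := w.nt_le hN
    have e2 := hN.2.1.2 (j - n) (by omega) (by omega)
    have e3 := hdr (j - n)
    rw [sub_add_cancel] at e3
    omega
  edge := fun i => ⟨by omega, ⟨by omega, fun m h1 h2 => by omega⟩, Or.inl (by omega)⟩
  perN := by
    rintro i j r ⟨h1, h2, h3⟩
    refine ⟨by omega, ?_, ?_⟩
    · have := w.st_per r h2
      rwa [show j - 1 + r * n = j + r * n - 1 by ring] at this
    · rcases h3 with h3 | h3
      · left; omega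
      · right
        rwa [w.h_per, per_mul w.perT]
  perC := by
    rintro i j r ⟨h1, h2, h3⟩
    refine ⟨by omega, ?_, ?_⟩
    · have := w.st_per r h2
      rwa [show j - 1 + r * n = j + r * n - 1 by ring] at this
    · rwa [w.h_per, per_mul w.perC]
  nc := fun i j r s => w.nt_nc
  sub := fun i j => w.ct_nt
  big := by
    rintro i j ⟨h1, h2, t, ht, h3⟩
    obtain ⟨v1, v2⟩ := w.v2 j t ht
    obtain ⟨p, hp, hpd⟩ := w.exists_depth (j - 1) (t - 1)
    obtain ⟨q, hq, hqd⟩ := w.exists_depth (j - 1) (t - 2)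
    have hip : i < p := by
      by_contra hcon
      rcases (not_lt.1 hcon).eq_or_lt with e | e
      · subst e; omega
      · have := hp.lt_of_lt h2 e; omega
    have hpq : p < q := by
      by_contra hcon
      rcases (not_lt.1 hcon).eq_or_lt with e | e
      · subst e; omega
      · have := hq.lt_of_lt hp e; omega
    refine ⟨p, q, hip, hpq, by have := hq.1; omega, ?_, ?_⟩
    · exact w.cell hp h2 h3 (by omega) v2 (by omega) v1
    · exact w.cell hq h2 h3 (by omega) v2 (by omega) v1

theorem Wd.mem_T (w : Wd n T C h) (j : ℤ) (t : ℕ) :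
    t ∈ T j ↔ t ≠ 0 ∧ ∃ i, NT T h i j ∧ h (j - 1) - h i = t := by
  constructor
  · intro ht
    refine ⟨fun h0 => w.val0 j (h0 ▸ ht), ?_⟩
    obtain ⟨i, hi, hd⟩ := w.exists_depth (j - 1) t
    exact ⟨i, ⟨by have := hi.1; omega, hi, Or.inr ⟨t, ht, hd⟩⟩, hd⟩
  · rintro ⟨h0, i, ⟨h1, h2, h3⟩, h4⟩
    rcases h3 with h3 | ⟨t', ht', h3⟩
    · subst h3; omega
    · have : t = t' := by omega
      rwa [this]

theorem Wd.mem_C (w : Wd n T C h) (j : ℤ) (t : ℕ) :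
    t ∈ C j ↔ ∃ i, CT C h i j ∧ h (j - 1) - h i = t := by
  constructor
  · intro ht
    obtain ⟨i, hi, hd⟩ := w.exists_depth (j - 1) t
    exact ⟨i, ⟨by have := hi.1; omega, hi, ⟨t, ht, hd⟩⟩, hd⟩
  · rintro ⟨i, ⟨h1, h2, t', ht', h3⟩, h4⟩
    have : t = t' := by omega
    rwa [this]

theorem Wd.depth_le {h' : ℤ → ℤ} (w : Wd n T C h)
    (hst : ∀ j i, St h j i → St h' j i) (j : ℤ) :
    ∀ (t : ℕ) (i : ℤ), St h j i → h j - h i = t → (t : ℤ) ≤ h' j - h' i := by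
  intro t
  induction t with
  | zero =>
    intro i hi hd
    have := hst _ _ hi
    rcases hi.1.eq_or_lt with e | e
    · subst e; simp
    · have := this.2 j e le_rfl
      push_cast
      omega
  | succ t ih =>
    intro i hi hd
    obtain ⟨k, hk, hkd⟩ := w.exists_depth j t
    have e1 := ih k hk hkd
    have hik : i < k := by
      by_contra hcon
      rcases (not_lt.1 hcon).eq_or_lt with e | e
      · subst e; omega
      · have := hk.lt_of_lt hi e; omega
    have := (hst _ _ hi).lt_of_lt (hst _ _ hk) hik
    push_cast
    omega

theorem Wd.inj {T' C' : ℤ → Finset ℕ} {h' : ℤ → ℤ} (w : Wd n T C h) (w' : Wd n T' C' h')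
    (hN : NT T h = NT T' h') (hC : CT C h = CT C' h') : T = T' ∧ C = C' := by
  have hst : ∀ j i, St h j i ↔ St h' j i := by
    intro j i
    rw [w.st_iff, w'.st_iff, hN]
  have hdep : ∀ j i, St h j i → h j - h i = h' j - h' i := by
    intro j i hi
    have hi' := (hst _ _).1 hi
    have p1 : 0 ≤ h j - h i := by
      rcases hi.1.eq_or_lt with e | e
      · subst e; simp
      · have := hi.2 j e le_rfl; omega
    have p2 : 0 ≤ h' j - h' i := by
      rcases hi'.1.eq_or_lt with e | e
      · subst e; simp
      · have := hi'.2 j e le_rfl; omega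
    have e1 := w.depth_le (fun j i => (hst j i).1) j
      (h j - h i).toNat i hi (by omega)
    have e2 := w'.depth_le (fun j i => (hst j i).2) j
      (h' j - h' i).toNat i hi' (by omega)
    omega
  constructor
  · funext j
    ext t
    rw [w.mem_T, w'.mem_T, hN]
    refine and_congr_right fun _ => exists_congr fun i => and_congr_right fun hh => ?_
    rw [hdep (j - 1) i ((hst _ _).2 hh.2.1)]
  · funext j
    ext t
    rw [w.mem_C, w'.mem_C, hC]
    refine exists_congr fun i => and_congr_right fun hh => ?_
    rw [hdep (j - 1) i ((hst _ _).2 hh.2.1)]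

end wd

section surj
open Classical in
/-- number of stack elements of the dissection above `i` at time `j` -/
noncomputable def dep (S : ℤ → ℤ → Prop) (j i : ℤ) : ℕ := ((Finset.Ioc i j).filter (S j)).card

def SN (N : ℤ → ℤ → Prop) (j i : ℤ) : Prop :=
  i ≤ j ∧ ∀ a b, N a b → a < i → i < b → b ≤ j → False

open Classical in
noncomputable def TS (n : ℕ) (N A : ℤ → ℤ → Prop) (j : ℤ) : Finset ℕ :=
  ((Finset.Ico (j - n) (j - 1)).filter (fun i => A i j)).image (dep (SN N) (j - 1))

variable {n : ℕ} {N C : ℤ → ℤ → Prop}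

theorem mem_TS {A : ℤ → ℤ → Prop} (hA : ∀ i j, A i j → j - i ≤ n) (j : ℤ) (t : ℕ) :
    t ∈ TS n N A j ↔ ∃ i, i < j - 1 ∧ A i j ∧ dep (SN N) (j - 1) i = t := by
  unfold TS
  simp only [Finset.mem_image, Finset.mem_filter, Finset.mem_Ico]
  constructor
  · rintro ⟨i, ⟨h1, h2⟩, h3⟩
    exact ⟨i, h1.2, h2, h3⟩
  · rintro ⟨i, h1, h2, h3⟩
    have := hA _ _ h2
    exact ⟨i, ⟨⟨by omega, h1⟩, h2⟩, h3⟩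

theorem dep_add (S : ℤ → ℤ → Prop) {j i k : ℤ} (h1 : i ≤ k) (h2 : k ≤ j) :
    dep S j i = ((Finset.Ioc i k).filter (by classical exact fun x => decide (S j x) = true)).card
      + dep S j k := by
  classical
  unfold dep
  rw [← Finset.card_union_of_disjoint]
  · congr 1
    ext x
    simp only [Finset.mem_filter, Finset.mem_Ioc, Finset.mem_union, decide_eq_true_eq]
    constructor
    · rintro ⟨⟨h3, h4⟩, h5⟩
      by_cases hx : x ≤ k
      · exact Or.inl ⟨⟨h3, hx⟩, h5⟩
      · exact Or.inr ⟨⟨by omega, h4⟩, h5⟩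
    · rintro (⟨⟨h3, h4⟩, h5⟩ | ⟨⟨h3, h4⟩, h5⟩)
      · exact ⟨⟨by omega, by omega⟩, h5⟩
      · exact ⟨⟨by omega, by omega⟩, h5⟩
  · rw [Finset.disjoint_left]
    simp only [Finset.mem_filter, Finset.mem_Ioc]
    intro x hx hx'
    omega

theorem dep_anti (S : ℤ → ℤ → Prop) {j i k : ℤ} (h1 : i ≤ k) : dep S j k ≤ dep S j i := by
  classical
  unfold dep
  apply Finset.card_le_card
  intro x
  simp only [Finset.mem_filter, Finset.mem_Ioc]
  rintro ⟨h3, h5⟩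
  exact ⟨by omega, h5⟩

theorem dep_lt (S : ℤ → ℤ → Prop) {j i k : ℤ} (h1 : i < k) (h2 : k ≤ j) (hk : S j k) :
    dep S j k + 1 ≤ dep S j i := by
  classical
  unfold dep
  apply Finset.card_lt_card
  rw [Finset.ssubset_iff_of_subset]
  · exact ⟨k, by simp [h1, h2, hk], by simp⟩
  · intro x
    simp only [Finset.mem_filter, Finset.mem_Ioc]
    rintro ⟨h3, h5⟩
    exact ⟨by omega, h5⟩

theorem dep_self (S : ℤ → ℤ → Prop) (j : ℤ) : dep S j j = 0 := by
  simp [dep]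

theorem sn_self (j : ℤ) : SN N j j := ⟨le_rfl, fun a b _ _ h1 h2 => by omega⟩

theorem SN.mono {j k i : ℤ} (h : SN N j i) (h1 : i ≤ k) (h2 : k ≤ j) : SN N k i :=
  ⟨h1, fun a b hab h3 h4 h5 => h.2 a b hab h3 h4 (by omega)⟩

theorem Dis.sn_of (h : Dis n N C) {i j : ℤ} (hN : N i j) : SN N (j - 1) i :=
  ⟨by have := h.lt _ _ hN; omega, fun a b hab h1 h2 h3 => h.nc a b i j hab hN h1 h2 (by omega)⟩

theorem Dis.lenC (h : Dis n N C) : ∀ i j, C i j → j - i ≤ (n : ℤ) :=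
  fun i j hC => h.len _ _ (h.sub _ _ hC)

/-- leftmost neighbour -/
theorem Dis.exists_left (h : Dis n N C) (j : ℤ) :
    ∃ l, N l j ∧ l < j ∧ (∀ i, N i j → l ≤ i) ∧ (TS n N N j).sup id = dep (SN N) (j - 1) l := by
  obtain ⟨l, hl, hmin⟩ := Int.exists_least_of_bdd (P := fun l => N l j)
    ⟨j - n, fun z hz => by have := h.len _ _ hz; omega⟩
    ⟨j - 1, by have := h.edge (j - 1); rwa [sub_add_cancel] at this⟩
  have hlt := h.lt _ _ hl
  refine ⟨l, hl, hlt, hmin, ?_⟩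
  apply le_antisymm
  · apply Finset.sup_le
    intro t ht
    rw [mem_TS h.len] at ht
    obtain ⟨i, h1, h2, rfl⟩ := ht
    exact dep_anti _ (hmin i h2)
  · by_cases hl1 : l = j - 1
    · rw [hl1, dep_self]
      exact Nat.zero_le _
    · refine Finset.le_sup (f := id) (b := dep (SN N) (j - 1) l) ?_
      rw [mem_TS h.len]
      exact ⟨l, by omega, hl, rfl⟩

noncomputable def HS (n : ℕ) (N : ℤ → ℤ → Prop) : ℤ → ℤ :=
  hgt (fun j => 1 - (((TS n N N j).sup id : ℕ) : ℤ))

theorem HS_step (j : ℤ) : HS n N j = HS n N (j - 1) + 1 - (((TS n N N j).sup id : ℕ) : ℤ) := by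
  unfold HS
  rw [hgt_step]
  ring

theorem Dis.sn_step (h : Dis n N C) {j l k : ℤ} (hl : N l j) (hmin : ∀ i, N i j → l ≤ i)
    (hk : k < j) : SN N j k ↔ SN N (j - 1) k ∧ k ≤ l := by
  constructor
  · intro hs
    refine ⟨hs.mono (by omega) (by omega), ?_⟩
    by_contra hcon
    exact hs.2 l j hl (by omega) hk le_rfl
  · rintro ⟨h1, h2⟩
    refine ⟨hk.le, fun a b hab h3 h4 h5 => ?_⟩
    by_cases hb : b = j
    · subst hb
      have := hmin a hab
      omega
    · exact h1.2 a b hab h3 h4 (by omega)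

theorem Dis.hs_dep (h : Dis n N C) (i : ℤ) (m : ℕ) :
    SN N (i + m) i → HS n N (i + m) - HS n N i = dep (SN N) (i + m) i := by
  induction m with
  | zero => intro _; simp [dep_self]
  | succ m ih =>
    intro hs
    push_cast at hs ⊢
    obtain ⟨l, hl, hlj, hmin, hsup⟩ := h.exists_left (i + (m + 1))
    have e : i + ((m : ℤ) + 1) - 1 = i + m := by ring
    have hst := HS_step (n := n) (N := N) (i + (m + 1))
    have hs' := (h.sn_step hl hmin (by omega)).1 hs
    rw [e] at hst hs' hsup
    have e1 := ih hs'.1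
    rw [hsup] at hst
    have e2 := dep_add (SN N) (j := i + m) hs'.2 (by omega)
    have e3 : dep (SN N) (i + (m + 1)) i = ((Finset.Ioc i l).filter
        (by classical exact fun x => decide (SN N (i + m) x) = true)).card + 1 := by
      classical
      unfold dep
      rw [← Finset.card_insert_of_notMem (a := i + ((m : ℤ) + 1))]
      · congr 1
        ext x
        simp only [Finset.mem_filter, Finset.mem_Ioc, Finset.mem_insert, decide_eq_true_eq]
        constructor
        · rintro ⟨h1, h2⟩
          by_cases hx : x = i + (m + 1)
          · exact Or.inl hx
          · have := (h.sn_step hl hmin (by omega)).1 h2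
            rw [e] at this
            exact Or.inr ⟨⟨h1.1, this.2⟩, this.1⟩
        · rintro (rfl | ⟨h1, h2⟩)
          · exact ⟨by omega, sn_self _⟩
          · refine ⟨by omega, (h.sn_step hl hmin (by omega)).2 ⟨?_, h1.2⟩⟩
            rwa [e]
      · simp only [Finset.mem_filter, Finset.mem_Ioc]
        omega
    omega

theorem Dis.hs_dep' (h : Dis n N C) {i j : ℤ} (hs : SN N j i) :
    HS n N j - HS n N i = dep (SN N) j i := by
  have := hs.1
  have e : j = i + ((j - i).toNat : ℤ) := by omega
  have := h.hs_dep i (j - i).toNat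
  rw [← e] at this
  exact this hs

theorem Dis.st_iff (h : Dis n N C) (j i : ℤ) : St (HS n N) j i ↔ SN N j i := by
  constructor
  · intro hs
    by_contra hcon
    unfold SN at hcon
    simp only [not_and, not_forall] at hcon
    obtain ⟨a0, b0, hab0, h1, h2, h3, -⟩ := hcon hs.1
    obtain ⟨b, ⟨⟨a, hab, ha⟩, hib, hbj⟩, hmin⟩ := Int.exists_least_of_bdd
      (P := fun b => (∃ a, N a b ∧ a < i) ∧ i < b ∧ b ≤ j) ⟨i, fun z hz => hz.2.1.le⟩
      ⟨b0, ⟨a0, hab0, h1⟩, h2, h3⟩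
    have hsn : SN N (b - 1) i := by
      refine ⟨by omega, fun a' b' hab' h1 h2 h3 => ?_⟩
      have := hmin b' ⟨⟨a', hab', h1⟩, h2, by omega⟩
      omega
    have e1 := h.hs_dep' hsn
    have e2 := dep_lt (SN N) ha (by omega) hsn
    have e3 : dep (SN N) (b - 1) a ≤ (TS n N N b).sup id := by
      refine Finset.le_sup (f := id) (b := dep (SN N) (b - 1) a) ?_
      rw [mem_TS h.len]
      exact ⟨a, by omega, hab, rfl⟩
    have e4 := HS_step (n := n) (N := N) b
    have e5 := hs.2 b hib hbj
    omega
  · intro hs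
    refine ⟨hs.1, fun m h1 h2 => ?_⟩
    have e1 := h.hs_dep' (hs.mono h1.le h2)
    have e2 := dep_lt (SN N) h1 le_rfl (sn_self (N := N) m)
    omega

theorem Dis.sn_per (h : Dis n N C) {j i : ℤ} (r : ℤ) (hs : SN N j i) :
    SN N (j + r * n) (i + r * n) := by
  refine ⟨by have := hs.1; omega, fun a b hab h1 h2 h3 => ?_⟩
  exact hs.2 _ _ (h.perN a b (-r) hab) (by linarith) (by linarith) (by linarith)

theorem Dis.dep_per_le (h : Dis n N C) (j i r : ℤ) :
    dep (SN N) j i ≤ dep (SN N) (j + r * n) (i + r * n) := by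
  classical
  unfold dep
  apply Finset.card_le_card_of_injOn (fun x => x + r * n)
  · intro x hx
    simp only [Finset.coe_filter, Finset.mem_Ioc, Set.mem_setOf_eq] at hx ⊢
    exact ⟨by omega, h.sn_per r hx.2⟩
  · intro x _ y _ hxy
    simpa using hxy

theorem Dis.dep_per (h : Dis n N C) (j i r : ℤ) :
    dep (SN N) (j + r * n) (i + r * n) = dep (SN N) j i := by
  apply le_antisymm
  · have := h.dep_per_le (j + r * n) (i + r * n) (-r)
    simpa using this
  · exact h.dep_per_le j i r

theorem Dis.ts_per (h : Dis n N C) {A : ℤ → ℤ → Prop} (hA : ∀ i j, A i j → j - i ≤ n)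
    (hp : ∀ i j r, A i j → A (i + r * n) (j + r * n)) (j : ℤ) :
    TS n N A (j + n) = TS n N A j := by
  ext t
  rw [mem_TS hA, mem_TS hA]
  constructor
  · rintro ⟨i, h1, h2, h3⟩
    refine ⟨i + (-1) * n, by linarith, ?_, ?_⟩
    · have := hp _ _ (-1) h2
      simpa using this
    · have := h.dep_per (j + n - 1) i (-1)
      rw [← h3, ← this]
      congr 1
      ring
  · rintro ⟨i, h1, h2, h3⟩
    refine ⟨i + 1 * n, by linarith, ?_, ?_⟩
    · have := hp _ _ 1 h2
      simpa using this
    · have := h.dep_per (j - 1) i 1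
      rw [← h3, ← this]
      congr 1
      ring

theorem Dis.ct_lt (h : Dis n N C) {i j : ℤ} (hC : C i j) : i < j - 1 := by
  obtain ⟨p, q, h1, h2, h3, -, -⟩ := h.big _ _ hC
  omega

theorem Dis.wd (h : Dis n N C) (hn : 1 ≤ n) : Wd n (TS n N N) (TS n N C) (HS n N) where
  step := fun j => HS_step j
  val0 := by
    intro j h0
    rw [mem_TS h.len] at h0
    obtain ⟨i, h1, h2, h3⟩ := h0
    have := dep_lt (SN N) h1 le_rfl (sn_self (j - 1))
    omega
  sub := by
    intro j t ht
    rw [mem_TS h.lenC] at ht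
    rw [mem_TS h.len]
    obtain ⟨i, h1, h2, h3⟩ := ht
    exact ⟨i, h1, h.sub _ _ h2, h3⟩
  v2 := by
    intro j t ht
    rw [mem_TS h.lenC] at ht
    obtain ⟨i, h1, h2, h3⟩ := ht
    have hij := h.sub _ _ h2
    obtain ⟨p, q, a1, a2, a3, hp, hq⟩ := h.big _ _ h2
    have key : ∀ x, i < x → x < j → Cell N i j x → SN N (j - 1) x := by
      intro x x1 x2 hx
      refine ⟨by omega, fun a b hab b1 b2 b3 => ?_⟩
      by_cases hia : i ≤ a
      · have := hx.2.2 a b hab hia (by omega) b1 b2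
        omega
      · exact h.nc a b i j hab hij (by omega) (by omega) (by omega)
    have sp := key p a1 (by omega) hp
    have sq := key q (by omega) a3 hq
    have d1 := dep_lt (SN N) a1 (by omega) sp
    have d2 := dep_lt (SN N) a2 (by omega) sq
    refine ⟨by omega, fun ht => ?_⟩
    rw [mem_TS h.len] at ht
    obtain ⟨k, k1, k2, k3⟩ := ht
    have hik : i < k := by
      by_contra hcon
      have := dep_anti (SN N) (j := j - 1) (not_lt.1 hcon)
      omega
    have hkq : k < q := by
      by_contra hcon
      have := dep_anti (SN N) (j := j - 1) (not_lt.1 hcon)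
      omega
    have := hq.2.2 k j k2 hik.le le_rfl hkq a3
    omega
  perT := h.ts_per h.len h.perN
  perC := h.ts_per h.lenC h.perC
  drift := by
    have hD : ∀ j, HS n N (j + 1 + n) - HS n N (j + 1) = HS n N (j + n) - HS n N j := by
      intro j
      have e1 := HS_step (n := n) (N := N) (j + 1 + n)
      have e2 := HS_step (n := n) (N := N) (j + 1)
      rw [h.ts_per h.len h.perN, show j + 1 + (n : ℤ) - 1 = j + n by ring] at e1
      rw [add_sub_cancel_right] at e2
      omega
    have hc : ∀ j, HS n N (j + n) - HS n N j = HS n N (0 + n) - HS n N 0 := by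
      intro j
      have := per_mul (n := 1) (f := fun j => HS n N (j + n) - HS n N j) hD 0 j
      simpa using this
    obtain ⟨L, ⟨i, v, hiv, hL⟩, hmax⟩ := Int.exists_greatest_of_bdd
      (P := fun L => ∃ i j, N i j ∧ j - i = L)
      ⟨n, by rintro z ⟨i, j, h1, rfl⟩; exact h.len _ _ h1⟩ ⟨_, 0, _, h.edge 0, rfl⟩
    have hs : SN N (v + n) v := by
      refine ⟨by omega, fun a b hab b1 b2 b3 => ?_⟩
      have hlt := h.lt _ _ hiv
      have := hmax _ ⟨a, b, hab, rfl⟩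
      exact h.nc i v a b hiv hab (by omega) b1 b2
    have e1 := h.hs_dep' hs
    have e2 := dep_lt (SN N) (by omega : v < v + n) le_rfl (sn_self (N := N) _)
    have e3 := hc v
    exact ⟨HS n N (0 + n) - HS n N 0, by omega, fun j => by have := hc j; omega⟩

theorem Dis.nt (h : Dis n N C) : NT (TS n N N) (HS n N) = N := by
  funext i j
  apply propext
  constructor
  · rintro ⟨h1, h2, h3⟩
    rcases h3 with rfl | ⟨t, ht, h3⟩
    · have := h.edge (j - 1)
      rwa [sub_add_cancel] at this
    · rw [mem_TS h.len] at ht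
      obtain ⟨k, k1, k2, k3⟩ := ht
      have hk := h.sn_of k2
      have e1 := h.hs_dep' hk
      have : i = k := h2.inj ((h.st_iff _ _).2 hk) (by omega)
      rwa [this]
  · intro hN
    have hs := h.sn_of hN
    refine ⟨h.lt _ _ hN, (h.st_iff _ _).2 hs, ?_⟩
    by_cases hi : i = j - 1
    · exact Or.inl hi
    · refine Or.inr ⟨_, (mem_TS h.len _ _).2 ⟨i, ?_, hN, rfl⟩, h.hs_dep' hs⟩
      have := h.lt _ _ hN
      omega

theorem Dis.ct (h : Dis n N C) : CT (TS n N C) (HS n N) = C := by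
  funext i j
  apply propext
  constructor
  · rintro ⟨h1, h2, t, ht, h3⟩
    rw [mem_TS h.lenC] at ht
    obtain ⟨k, k1, k2, k3⟩ := ht
    have hk := h.sn_of (h.sub _ _ k2)
    have e1 := h.hs_dep' hk
    have : i = k := h2.inj ((h.st_iff _ _).2 hk) (by omega)
    rwa [this]
  · intro hC
    have hN := h.sub _ _ hC
    have hs := h.sn_of hN
    exact ⟨h.lt _ _ hN, (h.st_iff _ _).2 hs, _,
      (mem_TS h.lenC _ _).2 ⟨i, h.ct_lt hC, hC, rfl⟩, h.hs_dep' hs⟩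

end surj

section count
open PowerSeries

def Val (x : Finset ℕ × Finset ℕ) : Prop :=
  0 ∉ x.1 ∧ x.2 ⊆ x.1 ∧ ∀ t ∈ x.2, 2 ≤ t ∧ t - 1 ∉ x.1

open Classical in
noncomputable def BS (m : ℕ) : Finset (Finset ℕ × Finset ℕ) :=
  ((Finset.range (m + 1)).powerset ×ˢ (Finset.range (m + 1)).powerset).filter Val

theorem mem_BS (m : ℕ) (x : Finset ℕ × Finset ℕ) :
    x ∈ BS m ↔ Val x ∧ x.1 ⊆ Finset.range (m + 1) := by
  unfold BS
  simp only [Finset.mem_filter, Finset.mem_product, Finset.mem_powerset]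
  constructor
  · rintro ⟨⟨h1, h2⟩, h3⟩
    exact ⟨h3, h1⟩
  · rintro ⟨h1, h2⟩
    exact ⟨⟨h2, h1.2.1.trans h2⟩, h1⟩

open Classical in
noncomputable def VS (m : ℕ) : Finset (Finset ℕ × Finset ℕ) :=
  (BS m).filter (fun x => x.1.sup id = m)

theorem subset_range_iff (s : Finset ℕ) (m : ℕ) : s ⊆ Finset.range (m + 1) ↔ s.sup id ≤ m := by
  rw [Finset.sup_le_iff]
  constructor
  · intro h t ht
    have := Finset.mem_range.1 (h ht)
    simp only [id]
    omega
  · intro h t ht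
    have := h t ht
    simp only [id] at this
    exact Finset.mem_range.2 (by omega)

theorem mem_VS (m : ℕ) (x : Finset ℕ × Finset ℕ) : x ∈ VS m ↔ Val x ∧ x.1.sup id = m := by
  unfold VS
  rw [Finset.mem_filter, mem_BS, subset_range_iff]
  constructor
  · rintro ⟨h1, h2⟩
    exact ⟨h1.1, h2⟩
  · rintro ⟨h1, h2⟩
    exact ⟨⟨h1, h2.le⟩, h2⟩

theorem card_BS (m : ℕ) : (BS m).card = ∑ k ∈ Finset.range (m + 1), (VS k).card := by
  classical
  rw [← Finset.card_biUnion]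
  · congr 1
    ext x
    simp only [Finset.mem_biUnion, mem_VS, mem_BS, Finset.mem_range, subset_range_iff]
    constructor
    · rintro ⟨h1, h2⟩
      exact ⟨_, by omega, h1, rfl⟩
    · rintro ⟨k, h1, h2, h3⟩
      exact ⟨h2, by omega⟩
  · intro a _ b _ hab
    show Disjoint (VS a) (VS b)
    rw [Finset.disjoint_left]
    intro x hx hx'
    rw [mem_VS] at hx hx'
    exact hab (hx.2.symm.trans hx'.2)

theorem card_BS_zero : (BS 0).card = 1 := by
  rw [Finset.card_eq_one]
  refine ⟨(∅, ∅), ?_⟩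
  ext ⟨s, t⟩
  rw [mem_BS, Finset.mem_singleton, Prod.mk.injEq]
  constructor
  · rintro ⟨⟨h1, h2, h3⟩, h4⟩
    have hs : s = ∅ := by
      rw [Finset.eq_empty_iff_forall_notMem]
      intro x hx
      have := Finset.mem_range.1 (h4 hx)
      have : x = 0 := by omega
      exact h1 (this ▸ hx)
    exact ⟨hs, Finset.subset_empty.1 (hs ▸ h2)⟩
  · rintro ⟨rfl, rfl⟩
    simp [Val]

theorem card_BS_one : (BS 1).card = 2 := by
  classical
  have : BS 1 = {(∅, ∅), ({1}, ∅)} := by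
    ext ⟨s, t⟩
    rw [mem_BS]
    simp only [Finset.mem_insert, Finset.mem_singleton, Prod.mk.injEq]
    constructor
    · rintro ⟨⟨h1, h2, h3⟩, h4⟩
      simp only at h1 h2 h3 h4
      have h5 : ∀ x ∈ s, x = 1 := by
        intro x hx
        have := Finset.mem_range.1 (h4 hx)
        have : x ≠ 0 := fun e => h1 (e ▸ hx)
        omega
      have ht : t = ∅ := by
        rw [Finset.eq_empty_iff_forall_notMem]
        intro x hx
        have := h5 x (h2 hx)
        have := (h3 x hx).1
        omega
      by_cases h6 : 1 ∈ s
      · right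
        refine ⟨?_, ht⟩
        ext x
        simp only [Finset.mem_singleton]
        exact ⟨h5 x, fun e => e ▸ h6⟩
      · left
        refine ⟨?_, ht⟩
        rw [Finset.eq_empty_iff_forall_notMem]
        intro x hx
        exact h6 (h5 x hx ▸ hx)
    · rintro (⟨rfl, rfl⟩ | ⟨rfl, rfl⟩) <;> simp [Val]
  rw [this, Finset.card_pair]
  simp

theorem card_BS_succ (m : ℕ) : (BS (m + 2)).card = 2 * (BS (m + 1)).card + (BS m).card := by
  classical
  let f : Finset ℕ × Finset ℕ → Finset ℕ × Finset ℕ := fun x => (insert (m + 2) x.1, x.2)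
  let g : Finset ℕ × Finset ℕ → Finset ℕ × Finset ℕ :=
    fun x => (insert (m + 2) x.1, insert (m + 2) x.2)
  have hb : ∀ k, k ≤ m + 1 → ∀ x ∈ BS k, m + 2 ∉ x.1 ∧ m + 2 ∉ x.2 := by
    intro k hk x hx
    rw [mem_BS] at hx
    have : m + 2 ∉ x.1 := by
      intro h
      have := Finset.mem_range.1 (hx.2 h)
      omega
    exact ⟨this, fun h => this (hx.1.2.1 h)⟩
  have key : BS (m + 2) = (BS (m + 1) ∪ (BS (m + 1)).image f) ∪ (BS m).image g := by
    ext ⟨s, t⟩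
    simp only [Finset.mem_union, Finset.mem_image]
    constructor
    · intro hx
      rw [mem_BS] at hx
      obtain ⟨⟨h1, h2, h3⟩, h4⟩ := hx
      simp only at h1 h2 h3 h4
      by_cases hs : m + 2 ∈ s
      · by_cases ht : m + 2 ∈ t
        · right
          have h5 := (h3 _ ht).2
          refine ⟨(s.erase (m + 2), t.erase (m + 2)), ?_, ?_⟩
          · rw [mem_BS]
            refine ⟨⟨?_, Finset.erase_subset_erase _ h2, ?_⟩, ?_⟩
            · simp [h1]
            · intro x hx
              have hx' := h3 x (Finset.mem_of_mem_erase hx)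
              exact ⟨hx'.1, fun h => hx'.2 (Finset.mem_of_mem_erase h)⟩
            · intro x hx
              simp only [Finset.mem_erase] at hx
              have h6 := Finset.mem_range.1 (h4 hx.2)
              have : x ≠ m + 2 - 1 := fun e => h5 (e ▸ hx.2)
              exact Finset.mem_range.2 (by omega)
          · simp only [g, Finset.insert_erase hs, Finset.insert_erase ht]
        · left; right
          refine ⟨(s.erase (m + 2), t), ?_, ?_⟩
          · rw [mem_BS]
            refine ⟨⟨?_, ?_, ?_⟩, ?_⟩
            · simp [h1]
            · intro x hx
              exact Finset.mem_erase.2 ⟨fun e => ht (e ▸ hx), h2 hx⟩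
            · intro x hx
              have hx' := h3 x hx
              exact ⟨hx'.1, fun h => hx'.2 (Finset.mem_of_mem_erase h)⟩
            · intro x hx
              simp only [Finset.mem_erase] at hx
              have h6 := Finset.mem_range.1 (h4 hx.2)
              exact Finset.mem_range.2 (by omega)
          · simp only [f, Finset.insert_erase hs]
      · left; left
        rw [mem_BS]
        refine ⟨⟨h1, h2, h3⟩, fun x hx => ?_⟩
        have h6 := Finset.mem_range.1 (h4 hx)
        have : x ≠ m + 2 := fun e => hs (e ▸ hx)
        exact Finset.mem_range.2 (by omega)
    · rintro ((hx | ⟨⟨s', t'⟩, hx, he⟩) | ⟨⟨s', t'⟩, hx, he⟩)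
      · rw [mem_BS] at hx ⊢
        exact ⟨hx.1, hx.2.trans (Finset.range_mono (by omega))⟩
      · rw [mem_BS] at hx ⊢
        simp only [f, Prod.mk.injEq] at he
        obtain ⟨⟨h1, h2, h3⟩, h4⟩ := hx
        simp only at h1 h2 h3 h4
        obtain ⟨rfl, rfl⟩ := he
        refine ⟨⟨by simp [h1], h2.trans (Finset.subset_insert _ _), fun x hx => ?_⟩, ?_⟩
        · have h5 := h3 x hx
          have h6 := Finset.mem_range.1 (h4 (h2 hx))
          refine ⟨h5.1, ?_⟩
          simp only [Finset.mem_insert, not_or]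
          exact ⟨by omega, h5.2⟩
        · intro x hx
          rcases Finset.mem_insert.1 hx with h | h
          · exact Finset.mem_range.2 (by omega)
          · have h6 := Finset.mem_range.1 (h4 h)
            exact Finset.mem_range.2 (by omega)
      · rw [mem_BS] at hx ⊢
        simp only [g, Prod.mk.injEq] at he
        obtain ⟨⟨h1, h2, h3⟩, h4⟩ := hx
        simp only at h1 h2 h3 h4
        obtain ⟨rfl, rfl⟩ := he
        refine ⟨⟨by simp [h1], Finset.insert_subset_insert _ h2, fun x hx => ?_⟩, ?_⟩
        · rcases Finset.mem_insert.1 hx with h | h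
          · refine ⟨by omega, ?_⟩
            simp only [Finset.mem_insert, not_or]
            refine ⟨by omega, fun h7 => ?_⟩
            have h6 := Finset.mem_range.1 (h4 h7)
            omega
          · have h5 := h3 x h
            have h6 := Finset.mem_range.1 (h4 (h2 h))
            refine ⟨h5.1, ?_⟩
            simp only [Finset.mem_insert, not_or]
            exact ⟨by omega, h5.2⟩
        · intro x hx
          rcases Finset.mem_insert.1 hx with h | h
          · exact Finset.mem_range.2 (by omega)
          · have h6 := Finset.mem_range.1 (h4 h)
            exact Finset.mem_range.2 (by omega)
  have insert_inj : ∀ s t : Finset ℕ, m + 2 ∉ s → m + 2 ∉ t →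
      insert (m + 2) s = insert (m + 2) t → s = t := by
    intro s t hs ht h
    rw [← Finset.erase_insert hs, h, Finset.erase_insert ht]
  have c1 : ((BS (m + 1)).image f).card = (BS (m + 1)).card := by
    apply Finset.card_image_of_injOn
    rintro ⟨s, t⟩ hx ⟨s', t'⟩ hx' he
    simp only [f, Prod.mk.injEq] at he
    have e1 := hb (m + 1) le_rfl _ hx
    have e2 := hb (m + 1) le_rfl _ hx'
    rw [insert_inj s s' e1.1 e2.1 he.1, he.2]
  have c2 : ((BS m).image g).card = (BS m).card := by
    apply Finset.card_image_of_injOn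
    rintro ⟨s, t⟩ hx ⟨s', t'⟩ hx' he
    simp only [g, Prod.mk.injEq] at he
    have e1 := hb m (by omega) _ hx
    have e2 := hb m (by omega) _ hx'
    rw [insert_inj s s' e1.1 e2.1 he.1, insert_inj t t' e1.2 e2.2 he.2]
  rw [key, Finset.card_union_of_disjoint, Finset.card_union_of_disjoint, c1, c2]
  · ring
  · rw [Finset.disjoint_left]
    intro x hx hx'
    obtain ⟨y, hy, rfl⟩ := Finset.mem_image.1 hx'
    exact (hb (m + 1) le_rfl _ hx).1 (Finset.mem_insert_self _ _)
  · rw [Finset.disjoint_left]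
    intro x hx hx'
    obtain ⟨y, hy, rfl⟩ := Finset.mem_image.1 hx'
    rcases Finset.mem_union.1 hx with h | h
    · exact (hb (m + 1) le_rfl _ h).1 (Finset.mem_insert_self _ _)
    · obtain ⟨z, hz, he⟩ := Finset.mem_image.1 h
      have := (hb (m + 1) le_rfl _ hz).2
      apply this
      have e2 : z.2 = insert (m + 2) y.2 := congrArg Prod.snd he
      rw [e2]
      exact Finset.mem_insert_self _ _

noncomputable def GG : ℤ⟦X⟧ := PowerSeries.mk fun m => ((VS m).card : ℤ)

noncomputable def AA : ℤ⟦X⟧ := PowerSeries.mk 1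

theorem AA_mul : AA * (1 - X) = 1 := mk_one_mul_one_sub_eq_one ℤ

theorem coeff_mul_AA (f : ℤ⟦X⟧) (m : ℕ) :
    coeff m (f * AA) = ∑ k ∈ Finset.range (m + 1), coeff k f := by
  rw [coeff_mul, Finset.Nat.sum_antidiagonal_eq_sum_range_succ_mk]
  simp [AA]

theorem GG_mul_AA : GG * AA = PowerSeries.mk fun m => ((BS m).card : ℤ) := by
  ext m
  rw [coeff_mul_AA, coeff_mk, card_BS]
  simp [GG]

theorem GG_AA_eq : GG * AA * (1 - 2 * X - X ^ 2) = 1 := by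
  rw [GG_mul_AA]
  ext m
  have e : (PowerSeries.mk fun m => ((BS m).card : ℤ)) * (1 - 2 * X - X ^ 2) =
    (PowerSeries.mk fun m => ((BS m).card : ℤ))
      - C (2 : ℤ) * ((PowerSeries.mk fun m => ((BS m).card : ℤ)) * X)
      - (PowerSeries.mk fun m => ((BS m).card : ℤ)) * X ^ 2 := by
    rw [show (C (2 : ℤ) : ℤ⟦X⟧) = 2 by simp]
    ring
  rw [e, map_sub, map_sub, coeff_C_mul, coeff_mul_X_pow']
  rcases m with _ | _ | m
  · simp [card_BS_zero]
  · rw [zero_add, show (1 : ℕ) = 0 + 1 from rfl, coeff_succ_mul_X]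
    simp [card_BS_zero, card_BS_one, coeff_one]
  · rw [coeff_succ_mul_X]
    simp [card_BS_succ, coeff_one]

theorem GG_eq : GG * (1 - 2 * X ^ 2 * AA ^ 2) = AA := by
  have h1 := GG_AA_eq
  have h2 := AA_mul
  linear_combination AA * h1 - GG * (1 + AA * (1 - X)) * h2

theorem binom_trunc {R : Type*} [CommRing R] (B : R) (L d : ℕ) :
    ∃ Q : R, (1 - B) ^ (d + 1) * ∑ l ∈ Finset.range L, ((d + l).choose l : R) * B ^ l
      = 1 + B ^ L * Q := by
  induction d with
  | zero =>
    refine ⟨-1, ?_⟩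
    have := mul_neg_geom_sum B L
    simp
    rw [this]; ring
  | succ d ih =>
    obtain ⟨Q, hQ⟩ := ih
    have key : ∀ L, (1 - B) * ∑ l ∈ Finset.range L, ((d + 1 + l).choose l : R) * B ^ l
        = ∑ l ∈ Finset.range L, ((d + l).choose l : R) * B ^ l
          - ((d + L).choose (d + 1) : R) * B ^ L := by
      intro L
      induction L with
      | zero => simp
      | succ L ih =>
        rw [Finset.sum_range_succ, Finset.sum_range_succ, mul_add, ih]
        have e1 : (d + 1 + L).choose L = (d + 1 + L).choose (d + 1) := by
          rw [Nat.choose_symm_add]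
        have e2 : (d + L).choose L = (d + L).choose d := by
          rw [Nat.choose_symm_add]
        have e3 : (d + (L + 1)).choose (d + 1) = (d + L).choose d + (d + L).choose (d + 1) := by
          rw [← Nat.choose_succ_succ]
          rfl
        rw [e1, e2, show d + 1 + L = d + (L + 1) by ring, e3]
        push_cast
        ring
    refine ⟨Q - (1 - B) ^ (d + 1) * ((d + L).choose (d + 1) : R), ?_⟩
    rw [pow_succ, mul_assoc, key, mul_sub, hQ]
    ring

theorem coeff_main (n : ℕ) (hn : 1 ≤ n) :
    ∑ k ∈ Finset.range n, coeff k (GG ^ n) = (torsionHalfCount n : ℤ) := by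
  obtain ⟨d, rfl⟩ : ∃ d, n = d + 1 := ⟨n - 1, by omega⟩
  rw [← coeff_mul_AA]
  obtain ⟨Q, hQ⟩ := binom_trunc (2 * X ^ 2 * AA ^ 2) (d / 2 + 1) d
  set S := ∑ l ∈ Finset.range (d / 2 + 1), ((d + l).choose l : ℤ⟦X⟧) * (2 * X ^ 2 * AA ^ 2) ^ l
    with hS
  have h1 : GG ^ (d + 1) * (1 - 2 * X ^ 2 * AA ^ 2) ^ (d + 1) = AA ^ (d + 1) := by
    rw [← mul_pow, GG_eq]
  have h2 : GG ^ (d + 1) * AA = AA ^ (d + 2) * S - X ^ (2 * (d / 2 + 1)) *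
      (GG ^ (d + 1) * AA * 2 ^ (d / 2 + 1) * AA ^ (2 * (d / 2 + 1)) * Q) := by
    have e : (2 * X ^ 2 * AA ^ 2 : ℤ⟦X⟧) ^ (d / 2 + 1) =
      X ^ (2 * (d / 2 + 1)) * 2 ^ (d / 2 + 1) * AA ^ (2 * (d / 2 + 1)) := by
      rw [mul_pow, mul_pow, ← pow_mul, ← pow_mul]; ring
    rw [e] at hQ
    linear_combination (-GG ^ (d + 1) * AA) * hQ + AA * S * h1
  rw [h2, map_sub, coeff_X_pow_mul', if_neg (by omega), sub_zero, hS, Finset.mul_sum, map_sum]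
  unfold torsionHalfCount
  push_cast
  apply Finset.sum_congr rfl
  intro l hl
  have hl := Finset.mem_range.1 hl
  have e : AA ^ (d + 2) * (((d + l).choose l : ℤ⟦X⟧) * (2 * X ^ 2 * AA ^ 2) ^ l) =
      C ((2 : ℤ) ^ l * ((d + l).choose l : ℤ)) * (X ^ (2 * l) * AA ^ (d + 2 * l + 1 + 1)) := by
    rw [mul_pow, mul_pow, ← pow_mul, ← pow_mul]
    simp only [map_mul, map_pow, map_natCast]
    rw [show (C (2 : ℤ) : ℤ⟦X⟧) = 2 by simp]
    ring
  rw [e, coeff_C_mul, coeff_X_pow_mul', if_pos (by omega)]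
  have e2 : AA ^ (d + 2 * l + 1 + 1) = _ := mk_one_pow_eq_mk_choose_add ℤ (d + 2 * l + 1)
  rw [e2, coeff_mk, show d + 2 * l + 1 + (d - 2 * l) = 2 * (d + 1) - 1 by omega]
  congr 2
  apply Nat.choose_symm_of_eq_add
  omega

end count

section final
open PowerSeries

def Wset (n : ℕ) [NeZero n] : Set (ZMod n → Finset ℕ × Finset ℕ) :=
  {w | (∀ x, Val (w x)) ∧ ∑ x, (w x).1.sup id < n}

open Classical in
noncomputable def Wfin (n : ℕ) [NeZero n] : Finset (ZMod n → Finset ℕ × Finset ℕ) :=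
  (Finset.range n).biUnion fun k =>
    (Finset.finsuppAntidiag Finset.univ k).biUnion fun l => Fintype.piFinset fun x => VS (l x)

theorem Wfin_coe (n : ℕ) [NeZero n] : (Wfin n : Set _) = Wset n := by
  classical
  ext w
  simp only [Wfin, Wset, Finset.mem_coe, Finset.mem_biUnion, Finset.mem_range,
    Fintype.mem_piFinset, mem_VS, Set.mem_setOf_eq, Finset.mem_finsuppAntidiag]
  constructor
  · rintro ⟨k, hk, l, ⟨h1, -⟩, h2⟩
    refine ⟨fun x => (h2 x).1, ?_⟩
    rw [Finset.sum_congr rfl (fun x _ => (h2 x).2), h1]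
    exact hk
  · rintro ⟨h1, h2⟩
    refine ⟨_, h2, Finsupp.equivFunOnFinite.symm fun x => (w x).1.sup id, ⟨?_, ?_⟩, ?_⟩
    · rfl
    · exact Finset.subset_univ _
    · intro x
      exact ⟨h1 x, rfl⟩

theorem Wfin_card (n : ℕ) [NeZero n] : (Wfin n).card = torsionHalfCount n := by
  classical
  have hn : 1 ≤ n := NeZero.one_le
  have h := coeff_main n hn
  have : ((Wfin n).card : ℤ) = ∑ k ∈ Finset.range n, coeff k (GG ^ n) := by
    unfold Wfin
    rw [Finset.card_biUnion]
    · push_cast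
      apply Finset.sum_congr rfl
      intro k _
      rw [Finset.card_biUnion]
      · have e : GG ^ n = ∏ _x : ZMod n, GG := by
          rw [Finset.prod_const, Finset.card_univ, ZMod.card]
        rw [e, coeff_prod]
        push_cast
        apply Finset.sum_congr rfl
        intro l _
        rw [Fintype.card_piFinset]
        push_cast
        apply Finset.prod_congr rfl
        intro x _
        simp [GG]
      · intro l _ l' _ hne
        show Disjoint (Fintype.piFinset fun x => VS (l x)) (Fintype.piFinset fun x => VS (l' x))
        rw [Finset.disjoint_left]
        intro w h1 h2
        rw [Fintype.mem_piFinset] at h1 h2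
        apply hne
        ext x
        exact ((mem_VS _ _).1 (h1 x)).2.symm.trans ((mem_VS _ _).1 (h2 x)).2
    · intro k _ k' _ hne
      show Disjoint (Finset.biUnion _ _) (Finset.biUnion _ _)
      rw [Finset.disjoint_left]
      intro w h1 h2
      rw [Finset.mem_biUnion] at h1 h2
      obtain ⟨l, a1, a2⟩ := h1
      obtain ⟨l', b1, b2⟩ := h2
      rw [Fintype.mem_piFinset] at a2 b2
      apply hne
      rw [← (Finset.mem_finsuppAntidiag.1 a1).1, ← (Finset.mem_finsuppAntidiag.1 b1).1]
      apply Finset.sum_congr rfl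
      intro x _
      exact ((mem_VS _ _).1 (a2 x)).2.symm.trans ((mem_VS _ _).1 (b2 x)).2
  rw [h] at this
  exact_mod_cast this

theorem sum_range_zmod (n : ℕ) [NeZero n] (F : ZMod n → ℤ) :
    ∑ k ∈ Finset.range n, F (k : ZMod n) = ∑ x, F x := by
  refine Finset.sum_nbij' (fun k => (k : ZMod n)) (fun x => x.val) ?_ ?_ ?_ ?_ ?_
  · intro k _
    exact Finset.mem_univ _
  · intro x _
    exact Finset.mem_range.2 (ZMod.val_lt x)
  · intro k hk
    exact ZMod.val_cast_of_lt (Finset.mem_range.1 hk)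
  · intro x _
    exact ZMod.natCast_zmod_val x
  · intro k _
    rfl

theorem step_sum (n : ℕ) [NeZero n] (g : ZMod n → ℤ) (h : ℤ → ℤ)
    (hs : ∀ j : ℤ, h j = h (j - 1) + g (j : ZMod n)) (j : ℤ) :
    h (j + n) = h j + ∑ x, g x := by
  have key : ∀ m : ℕ, h (j + m) = h j + ∑ k ∈ Finset.range m, g (((j + 1 : ℤ) : ZMod n) + k) := by
    intro m
    induction m with
    | zero => simp
    | succ m ih =>
      rw [Finset.sum_range_succ, ← add_assoc, ← ih, hs]
      congr 2
      · push_cast; ring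
      · push_cast; ring
  rw [key, sum_range_zmod n (fun x => g (((j + 1 : ℤ) : ZMod n) + x))]
  congr 1
  exact Equiv.sum_comp (Equiv.addLeft ((j + 1 : ℤ) : ZMod n)) g

variable {n : ℕ} [NeZero n]

def wT (w : ZMod n → Finset ℕ × Finset ℕ) (j : ℤ) : Finset ℕ := (w (j : ZMod n)).1
def wC (w : ZMod n → Finset ℕ × Finset ℕ) (j : ℤ) : Finset ℕ := (w (j : ZMod n)).2
noncomputable def wH (w : ZMod n → Finset ℕ × Finset ℕ) : ℤ → ℤ :=
  hgt fun j => 1 - (((wT w j).sup id : ℕ) : ℤ)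

theorem wH_drift (w : ZMod n → Finset ℕ × Finset ℕ) (j : ℤ) :
    wH w (j + n) = wH w j + ((n : ℤ) - ((∑ x, (w x).1.sup id : ℕ) : ℤ)) := by
  rw [step_sum n (fun x => 1 - (((w x).1.sup id : ℕ) : ℤ)) (wH w) (fun j => hgt_step _ j) j]
  congr 1
  rw [Finset.sum_sub_distrib]
  simp

theorem Wset.wd {w : ZMod n → Finset ℕ × Finset ℕ} (hw : w ∈ Wset n) :
    Wd n (wT w) (wC w) (wH w) where
  step := by
    intro j
    have := hgt_step (fun j => 1 - (((wT w j).sup id : ℕ) : ℤ)) j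
    unfold wH
    rw [this]
    ring
  val0 := fun j => (hw.1 _).1
  sub := fun j => (hw.1 _).2.1
  v2 := fun j => (hw.1 _).2.2
  perT := by
    intro j
    simp [wT]
  perC := by
    intro j
    simp [wC]
  drift := by
    refine ⟨_, ?_, wH_drift w⟩
    have := hw.2
    omega

def wE (w : ZMod n → Finset ℕ × Finset ℕ) : ℤ → ℤ → Prop :=
  EE (NT (wT w) (wH w)) (CT (wC w) (wH w))

def wX (w : ZMod n → Finset ℕ × Finset ℕ) : Set (ℤ × ℤ) :=
  {a | 2 ≤ a.2 - a.1 ∧ wE w a.1 a.2}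

theorem Wset.dis {w : ZMod n → Finset ℕ × Finset ℕ} (hw : w ∈ Wset n) :
    Dis n (NT (wT w) (wH w)) (CT (wC w) (wH w)) := (Wset.wd hw).dis NeZero.one_le

theorem wX_good {w : ZMod n → Finset ℕ × Finset ℕ} (hw : w ∈ Wset n) : wX w ∈ goodDiagrams n := by
  have hp : Pt n (wE w) := (Wset.dis hw).pt
  refine ⟨fun a ha => ha.1, ?_, ?_, fun a ha => hp.len _ _ ha.2⟩
  · intro i j r hij
    have h1 : 2 ≤ j - i := hij.1
    exact ⟨by simp only; omega, hp.per _ _ r hij.2⟩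
  · intro i j r s hij hrs h1 h2 h3
    have := hp.pt i j r s hij.2 hrs.2 h1 h2 h3
    exact ⟨fun h => ⟨h, this.1⟩, fun h => ⟨h, this.2.1⟩, fun h => ⟨h, this.2.2.1⟩,
      fun h => ⟨h, this.2.2.2⟩⟩

theorem pt_iff {E : ℤ → ℤ → Prop} (hp : Pt n E) (p q : ℤ) :
    E p q ↔ (2 ≤ q - p ∧ E p q) ∨ q = p + 1 := by
  constructor
  · intro h
    have := hp.lt _ _ h
    by_cases hq : q = p + 1
    · exact Or.inr hq
    · exact Or.inl ⟨by omega, h⟩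
  · rintro (h | rfl)
    · exact h.2
    · exact hp.edge p

theorem wX_inj : Set.InjOn (wX (n := n)) (Wset n) := by
  intro w hw w' hw' he
  have d := Wset.dis hw
  have d' := Wset.dis hw'
  have hE : wE w = wE w' := by
    funext p q
    apply propext
    rw [pt_iff (E := wE w) d.pt, pt_iff (E := wE w') d'.pt]
    have : (p, q) ∈ wX w ↔ (p, q) ∈ wX w' := by rw [he]
    exact or_congr this Iff.rfl
  have hN : NT (wT w) (wH w) = NT (wT w') (wH w') := by
    rw [← d.nn, ← d'.nn]
    exact congrArg NN hE
  have hC : CT (wC w) (wH w) = CT (wC w') (wH w') := by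
    rw [← d.cc, ← d'.cc]
    exact congrArg CC hE
  obtain ⟨h1, h2⟩ := (Wset.wd hw).inj (Wset.wd hw') hN hC
  funext x
  obtain ⟨j, rfl⟩ := ZMod.intCast_surjective x
  exact Prod.ext (congrFun h1 j) (congrFun h2 j)

theorem wX_surj {X : Set (ℤ × ℤ)} (hX : X ∈ goodDiagrams n) : ∃ w ∈ Wset n, wX w = X := by
  have hn : 1 ≤ n := NeZero.one_le
  obtain ⟨h1, h2, h3, h4⟩ := hX
  let E : ℤ → ℤ → Prop := fun p q => (p, q) ∈ X ∨ q = p + 1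
  have mk : ∀ p q, p < q → (2 ≤ q - p → (p, q) ∈ X) → E p q := by
    intro p q hlt h
    by_cases hq : q = p + 1
    · exact Or.inr hq
    · exact Or.inl (h (by omega))
  have hp : Pt n E := by
    refine ⟨?_, ?_, ?_, ?_, ?_⟩
    · rintro i j (h | h)
      · have : 2 ≤ j - i := h1 _ h
        omega
      · omega
    · rintro i j (h | h)
      · exact h4 _ h
      · omega
    · intro i
      exact Or.inr rfl
    · rintro i j r (h | h)
      · exact Or.inl (h2 _ _ r h)
      · exact Or.inr (by rw [h]; ring)
    · rintro i j r s (h | h) (h' | h') a1 a2 a3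
      · have := h3 i j r s h h' a1 a2 a3
        exact ⟨mk _ _ a1 this.1, mk _ _ (by omega) this.2.1, mk _ _ a2 this.2.2.1,
          mk _ _ a3 this.2.2.2⟩
      all_goals omega
  have d := hp.dis
  have wd := d.wd hn
  let w : ZMod n → Finset ℕ × Finset ℕ := fun x =>
    (TS n (NN E) (NN E) x.val, TS n (NN E) (CC E) x.val)
  have hval : ∀ j : ℤ, (((j : ZMod n).val : ℕ) : ℤ) = j + (-(j / n)) * n := by
    intro j
    rw [ZMod.val_intCast]
    have := Int.emod_add_mul_ediv j n
    linarith
  have hT : wT w = TS n (NN E) (NN E) := by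
    funext j
    show TS n (NN E) (NN E) (((j : ZMod n).val : ℕ) : ℤ) = _
    rw [hval]
    exact per_mul wd.perT _ _
  have hC : wC w = TS n (NN E) (CC E) := by
    funext j
    show TS n (NN E) (CC E) (((j : ZMod n).val : ℕ) : ℤ) = _
    rw [hval]
    exact per_mul wd.perC _ _
  have hH : wH w = HS n (NN E) := by
    unfold wH HS
    rw [hT]
  refine ⟨w, ⟨fun x => ⟨wd.val0 _, wd.sub _, wd.v2 _⟩, ?_⟩, ?_⟩
  · obtain ⟨e, he, hd⟩ := wd.drift
    have a1 := wH_drift w 0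
    rw [hH, hd] at a1
    omega
  · have hE : wE w = E := by
      unfold wE
      rw [hT, hC, hH, d.nt, d.ct, hp.ee]
    ext ⟨p, q⟩
    show (2 ≤ q - p ∧ wE w p q) ↔ _
    rw [hE]
    constructor
    · rintro ⟨b1, b2 | b2⟩
      · exact b2
      · omega
    · intro h
      exact ⟨h1 _ h, Or.inl h⟩

theorem wX_image : goodDiagrams n = wX '' Wset n := by
  ext X
  constructor
  · intro h
    exact wX_surj h
  · rintro ⟨w, hw, rfl⟩
    exact wX_good hw

end final

/-- The set of `n`-periodic Ptolemy diagrams with all arcs of length at most `n`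
is finite, of cardinality `∑_{ℓ ≥ 0} 2^ℓ C(n−1+ℓ, ℓ) C(2n−1, n−1−2ℓ)`. -/
theorem count_goodDiagrams (n : ℕ) (hn : 1 ≤ n) :
    (goodDiagrams n).Finite ∧ (goodDiagrams n).ncard = torsionHalfCount n := by
  haveI : NeZero n := ⟨by omega⟩
  rw [wX_image, ← Wfin_coe]
  refine ⟨(Finset.finite_toSet _).image _, ?_⟩
  rw [Set.ncard_image_of_injOn (by rw [Wfin_coe]; exact wX_inj), Set.ncard_coe_finset, Wfin_card]
end
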